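/- arXiv:2305.04781 — 3 statements merged into one kernel-verified Lean document; each statement's English description precedes it below -/
import Mathlib

section
/- Let n ≥ 2 be an integer and let φ ∈ ℤ[x] be a monic polynomial whose reduction modulo p is irreducible in 𝔽_p[x] for every prime p ≤ n. Let a_0(x), a_1(x), …, a_{n−1}(x) ∈ ℤ[x] be polynomials each of degree strictly less than deg φ, and let a_n be an integer. Assume that a_n is coprime to n! and that the content of a_0(x) is coprime to n! (in particular a_0(x) ≠ 0). Then the polynomial Σ_{i=0}^{n−1} (n!/i!)·a_i(x)·φ(x)^i + a_n·φ(x)^n is irreducible in ℚ[x] (equivalently, Σ_{i=0}^{n−1} a_i(x)·φ(x)^i/i! + a_n·φ(x)^n/n! is irreducible over ℚ). -/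
open Polynomial

namespace SchurAux

theorem pow_le_pow_mul_choose (k : ℕ) : ∀ n, k ≤ n → n ^ k ≤ k ^ k * n.choose k := by
  induction k with
  | zero => intro n _; simp
  | succ k ih =>
    intro n hn
    obtain ⟨m, rfl⟩ : ∃ m, n = m + 1 := ⟨n - 1, by omega⟩
    have hkm : k ≤ m := by omega
    rcases Nat.eq_zero_or_pos k with rfl | hk
    · simp
    have h1 := ih m hkm
    have h2 := Nat.add_one_mul_choose_eq m k
    -- (m+1)^k * k^k ≤ (k+1)^k * m^k
    have h3 : (m + 1) ^ k * k ^ k ≤ (k + 1) ^ k * m ^ k := by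
      rw [← mul_pow, ← mul_pow]
      apply Nat.pow_le_pow_left
      nlinarith
    have h4 : (m + 1) ^ k * k ^ k ≤ (k + 1) ^ k * m.choose k * k ^ k := by
      calc _ ≤ _ := h3
        _ ≤ (k + 1) ^ k * (k ^ k * m.choose k) := Nat.mul_le_mul_left _ h1
        _ = _ := by ring
    have h5 := Nat.le_of_mul_le_mul_right h4 (by positivity)
    calc (m + 1) ^ (k + 1) = (m + 1) * (m + 1) ^ k := by ring
      _ ≤ (m + 1) * ((k + 1) ^ k * m.choose k) := Nat.mul_le_mul_left _ h5
      _ = (k + 1) ^ k * ((m + 1) * m.choose k) := by ring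
      _ = (k + 1) ^ k * ((m + 1).choose (k + 1) * (k + 1)) := by rw [h2]
      _ = _ := by ring

theorem choose_eq_prod {n k : ℕ} (hkn : k ≤ n)
    (h : ∀ p, p.Prime → k < p → ¬ p ∣ n.choose k) :
    n.choose k = ∏ p ∈ Nat.primesLE k, p ^ (n.choose k).factorization p := by
  conv_lhs => rw [← Nat.prod_pow_factorization_choose n k hkn]
  symm
  apply Finset.prod_subset_one_on_sdiff
  · intro p hp
    rw [Nat.mem_primesLE] at hp
    simp; omega
  · intro p hp
    simp only [Finset.mem_sdiff, Finset.mem_range, Nat.mem_primesLE, not_and] at hp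
    by_cases hpp : p.Prime
    · have : k < p := by
        by_contra hc
        exact hp.2 (by omega) hpp
      rw [Nat.factorization_eq_zero_of_not_dvd (h p hpp this), pow_zero]
    · rw [Nat.factorization_eq_zero_of_not_prime _ hpp, pow_zero]
  · intros; rfl

theorem choose_le_E1 {n k : ℕ} (hk : 0 < k) (hkn : k ≤ n)
    (h : ∀ p, p.Prime → k < p → ¬ p ∣ n.choose k) :
    n.choose k ≤ n ^ Nat.primeCounting k := by
  rw [choose_eq_prod hkn h, ← Nat.primesLE_card_eq_primeCounting]
  apply Finset.prod_le_pow_card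
  intro p _
  exact Nat.pow_factorization_choose_le (by omega)

theorem E1 {n k : ℕ} (hk : 0 < k) (hkn : k ≤ n)
    (h : ∀ p, p.Prime → k < p → ¬ p ∣ n.choose k) :
    n ^ k ≤ k ^ k * n ^ Nat.primeCounting k :=
  (pow_le_pow_mul_choose k n hkn).trans (Nat.mul_le_mul_left _ (choose_le_E1 hk hkn h))

theorem choose_le_E2 {n k : ℕ} (hk : 3 ≤ k) (hkn : 2 * k ≤ n)
    (h : ∀ p, p.Prime → k < p → ¬ p ∣ n.choose k) :
    n.choose k ≤ n ^ Nat.primeCounting (Nat.sqrt n) * 4 ^ (min k (n / 3)) := by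
  classical
  set s := Nat.primesLE k
  have e := choose_eq_prod (by omega : k ≤ n) h
  rw [← Finset.prod_filter_mul_prod_filter_not _ (fun p => p ≤ Nat.sqrt n)] at e
  rw [e]
  apply Nat.mul_le_mul
  · rw [← Nat.primesLE_card_eq_primeCounting]
    refine (Finset.prod_le_pow_card _ _ n ?_).trans ?_
    · intro p _
      exact Nat.pow_factorization_choose_le (by omega)
    · apply Nat.pow_le_pow_right (by omega)
      apply Finset.card_le_card
      intro p hp
      simp only [Finset.mem_filter, Nat.mem_primesLE] at hp ⊢
      exact ⟨hp.2, hp.1.2⟩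
  · refine le_trans ?_ (primorial_le_four_pow _)
    rw [primorial_eq_prod_primesLE]
    refine le_trans (b := ∏ p ∈ (Nat.primesLE k).filter (fun p => ¬ p ≤ Nat.sqrt n), if p ≤ n / 3 then p else 1) ?_ ?_
    · apply Finset.prod_le_prod'
      intro p hp
      simp only [Finset.mem_filter, Nat.mem_primesLE] at hp
      have hs : n < p ^ 2 := by
        have := Nat.sqrt_lt.1 (not_le.1 hp.2); nlinarith
      split_ifs with h3
      · calc _ ≤ p ^ 1 := Nat.pow_le_pow_right hp.1.2.pos (Nat.factorization_choose_le_one hs)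
          _ = p := pow_one p
      · rw [Nat.factorization_choose_of_lt_three_mul _ hp.1.1 (by omega) (by omega), pow_zero]
        rintro rfl
        omega
    · rw [← Finset.prod_filter]
      apply Finset.prod_le_prod_of_subset_of_one_le'
      · intro p hp
        simp only [Finset.mem_filter, Nat.mem_primesLE] at hp ⊢
        exact ⟨by omega, hp.1.1.2⟩
      · intro p hp _
        exact (Nat.prime_of_mem_primesLE hp).one_lt.le

theorem lower_aux {k : ℕ} (hk : 0 < k) (j : ℕ) (hj : j ≤ k) :
    4 ^ k * 3 ^ j ≤ 2 * k * (2 * k + j).choose k * 2 ^ j := by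
  induction j with
  | zero =>
    have := Nat.four_pow_le_two_mul_self_mul_centralBinom k hk
    simpa [Nat.centralBinom] using this
  | succ j ih =>
    have ih := ih (by omega)
    have h1 := Nat.add_one_mul_choose_eq (2 * k + j) (k - 1)
    have h2 : (2 * k + j + 1).choose k * (2 * k + j + 1 - k) = (2 * k + j).choose k * (2 * k + j + 1) := by
      have := Nat.choose_mul_succ_eq (2 * k + j) k
      linarith
    have h3 : 3 * (2 * k + j).choose k ≤ 2 * (2 * k + j + 1).choose k := by
      have e : 2 * k + j + 1 - k = k + j + 1 := by omega
      rw [e] at h2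
      by_contra hc
      push Not at hc
      have : 2 * ((2 * k + j).choose k * (2 * k + j + 1)) < 3 * (2 * k + j).choose k * (k + j + 1) := by
        rw [← h2]; nlinarith
      nlinarith [Nat.zero_le ((2 * k + j).choose k)]
    rw [pow_succ, pow_succ, ← add_assoc]
    nlinarith [Nat.zero_le (2 * k * 2 ^ j)]

theorem lower {n k : ℕ} (hk : 0 < k) (hn : 2 * k ≤ n) :
    4 ^ (min k (n / 3)) * 3 ^ k ≤ 2 * k * n.choose k * 2 ^ k := by
  rcases le_total (3 * k) n with h | h
  · rw [min_eq_left (by omega)]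
    have := lower_aux hk k le_rfl
    rw [show 2 * k + k = 3 * k by ring] at this
    refine this.trans ?_
    have := Nat.choose_le_choose k h
    gcongr
  · obtain ⟨j, rfl⟩ : ∃ j, n = 2 * k + j := ⟨n - 2 * k, by omega⟩
    have hj : j ≤ k := by omega
    obtain ⟨i, rfl⟩ : ∃ i, k = j + i := ⟨k - j, by omega⟩
    have h0 := lower_aux hk j hj
    set m := min (j + i) ((2 * (j + i) + j) / 3)
    have hm : 3 * m ≤ 3 * (j + i) - i := by omega
    have key : 4 ^ m * 3 ^ i ≤ 4 ^ (j + i) * 2 ^ i := by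
      apply (Nat.pow_le_pow_iff_left (n := 3) (by norm_num)).1
      calc (4 ^ m * 3 ^ i) ^ 3 = 4 ^ (3 * m) * 27 ^ i := by
            rw [mul_pow, ← pow_mul, ← pow_mul, mul_comm m, mul_comm i, pow_mul 3]; norm_num
        _ ≤ 4 ^ (3 * (j + i) - i) * 32 ^ i := by gcongr <;> norm_num
        _ = 4 ^ (3 * (j + i) - i) * 4 ^ i * 8 ^ i := by
            rw [mul_assoc, ← mul_pow]; norm_num
        _ = (4 ^ (j + i) * 2 ^ i) ^ 3 := by
            rw [← pow_add, Nat.sub_add_cancel (by omega), mul_pow, ← pow_mul, ← pow_mul, mul_comm (j + i), mul_comm i, pow_mul 2]; norm_num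
    calc 4 ^ m * 3 ^ (j + i) = (4 ^ m * 3 ^ i) * 3 ^ j := by ring
      _ ≤ 4 ^ (j + i) * 2 ^ i * 3 ^ j := by gcongr
      _ = (4 ^ (j + i) * 3 ^ j) * 2 ^ i := by ring
      _ ≤ _ := Nat.mul_le_mul_right _ h0
      _ = _ := by ring

theorem pi_le_30 (x : ℕ) (hx : 30 ≤ x) : 15 * Nat.primeCounting x ≤ 150 + 4 * x := by
  have h := Nat.primeCounting_add_le (a := 30) (k := 30) (by norm_num) le_rfl (x - 30)
  have h1 : Nat.primeCounting 30 = 10 := by decide +kernel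
  have h2 : Nat.totient 30 = 8 := by decide +kernel
  rw [h1, h2, Nat.add_sub_cancel' hx] at h
  omega

theorem pi_le_6 (x : ℕ) (hx : 6 ≤ x) : 3 * Nat.primeCounting x ≤ 9 + x := by
  have h := Nat.primeCounting_add_le (a := 6) (k := 6) (by norm_num) le_rfl (x - 6)
  have h1 : Nat.primeCounting 6 = 3 := by decide +kernel
  have h2 : Nat.totient 6 = 2 := by decide +kernel
  rw [h1, h2, Nat.add_sub_cancel' hx] at h
  omega

def PP : ℕ := 16516447045902521732188973253623425320896207954043566485360902980990824644545340710198976591011245999110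

theorem PP_spec : ∀ p < 258, p ∣ PP ∨ ¬ p.Prime := by decide +kernel

theorem PQ_spec : ∀ p < 23, p ∣ 9699690 ∨ ¬ p.Prime := by decide +kernel

theorem prime_of_gcd {P q p : ℕ} (hP : ∀ p < q, p ∣ P ∨ ¬ p.Prime) (h2 : 2 ≤ p) (hp : p < q ^ 2)
    (h : Nat.gcd p P = 1) : p.Prime := by
  by_contra hn
  have h1 := Nat.minFac_sq_le_self (by omega) hn
  have h3 : p.minFac.Prime := Nat.minFac_prime (by omega)
  have h4 : p.minFac < q := by
    by_contra hc
    push Not at hc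
    have : q ^ 2 ≤ p.minFac ^ 2 := Nat.pow_le_pow_left hc 2
    omega
  have h5 := (hP _ h4).resolve_right (not_not.2 h3)
  have h6 := Nat.dvd_gcd (Nat.minFac_dvd p) h5
  rw [h] at h6
  exact h3.one_lt.ne' (Nat.dvd_one.1 h6)

def findp (P m : ℕ) : ℕ → ℕ
  | 0 => 0
  | g + 1 => bif Nat.beq (Nat.gcd (m + (g + 1)) P) 1 then g + 1 else findp P m g

theorem findp_le (P m g : ℕ) : findp P m g ≤ g := by
  induction g with
  | zero => simp [findp]
  | succ g ih =>
    rw [findp]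
    cases Nat.beq (Nat.gcd (m + (g + 1)) P) 1
    · simp; omega
    · simp

theorem findp_spec (P m g : ℕ) (h : findp P m g ≠ 0) : Nat.gcd (m + findp P m g) P = 1 := by
  induction g with
  | zero => simp [findp] at h
  | succ g ih =>
    rw [findp] at h ⊢
    cases hb : Nat.beq (Nat.gcd (m + (g + 1)) P) 1
    · rw [hb] at h; exact ih h
    · exact Nat.eq_of_beq_eq_true hb

def chain (P g B : ℕ) : ℕ → ℕ → Bool
  | 0, m => Nat.ble B m
  | fuel + 1, m => Nat.ble B m || (Nat.blt 0 (findp P m g) && chain P g B fuel (m + findp P m g))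

theorem chain_spec (P g B fuel m : ℕ) (h : chain P g B fuel m = true) (x : ℕ) (hx : m ≤ x)
    (hB : x < B) : ∃ p, Nat.gcd p P = 1 ∧ x < p ∧ p ≤ x + g := by
  induction fuel generalizing m with
  | zero => rw [chain, Nat.ble_eq] at h; omega
  | succ fuel ih =>
    rw [chain, Bool.or_eq_true, Bool.and_eq_true, Nat.ble_eq, Nat.blt_eq] at h
    rcases h with h | ⟨h1, h2⟩
    · omega
    · by_cases hc : m + findp P m g ≤ x
      · exact ih _ h2 hc
      · have := findp_le P m g
        exact ⟨m + findp P m g, findp_spec P m g (by omega), by omega, by omega⟩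

theorem chain72 : chain PP 72 65537 1500 390 = true := by decide +kernel
theorem chain14 : chain 9699690 14 400 200 14 = true := by decide +kernel

def PL : List ℕ := [2, 3, 5, 7, 11, 13, 17, 19, 23, 29, 31, 37, 41, 43, 47, 53, 59, 61, 67, 71, 73, 79,
  83, 89, 97, 101, 103, 107, 109, 113]

theorem PL_prime : ∀ p ∈ PL, p.Prime := by
  unfold PL
  norm_num

def hasBig (k m : ℕ) : Bool := PL.any (fun p => Nat.blt k p && Nat.beq (m % p) 0)

theorem hasBig_spec (k m : ℕ) (h : hasBig k m = true) : ∃ p, p.Prime ∧ k < p ∧ p ∣ m := by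
  rw [hasBig, List.any_eq_true] at h
  obtain ⟨p, hp, h⟩ := h
  rw [Bool.and_eq_true, Nat.blt_eq] at h
  exact ⟨p, PL_prime p hp, h.1, Nat.dvd_of_mod_eq_zero (Nat.eq_of_beq_eq_true h.2)⟩

theorem smallchk : ∀ k < 14, ∀ n < 120, 0 < k → 2 * k ≤ n →
    ∃ j < k, hasBig k (n - j) = true := by decide +kernel

theorem pichk : ∀ k < 72, 2 ≤ k →
    Nat.primeCounting k ≤ k ∧ k ^ k < 400 ^ (k - Nat.primeCounting k) := by decide +kernel

theorem pichk' : ∀ k < 14, 2 ≤ k →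
    Nat.primeCounting k ≤ k ∧ k ^ k < 120 ^ (k - Nat.primeCounting k) := by decide +kernel

theorem n_lt {n k N : ℕ} (hn : 0 < n) (hp1 : Nat.primeCounting k ≤ k)
    (e1 : n ^ k ≤ k ^ k * n ^ Nat.primeCounting k)
    (hp2 : k ^ k < N ^ (k - Nat.primeCounting k)) : n < N := by
  by_contra hc
  push Not at hc
  have h3 : n ^ (k - Nat.primeCounting k) ≤ k ^ k := by
    have : n ^ (k - Nat.primeCounting k) * n ^ Nat.primeCounting k = n ^ k := by
      rw [← pow_add, Nat.sub_add_cancel hp1]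
    rw [← this] at e1
    exact Nat.le_of_mul_le_mul_right e1 (pow_pos (by omega) _)
  have := Nat.pow_le_pow_left hc (k - Nat.primeCounting k)
  omega

theorem dvd_choose_of {n k p j : ℕ} (hp : p.Prime) (hk : k < p) (hj : j < k)
    (hd : p ∣ n - j) : p ∣ n.choose k := by
  have h1 : p ∣ n.descFactorial k := by
    rw [Nat.descFactorial_eq_prod_range]
    exact hd.trans (Finset.dvd_prod_of_mem _ (Finset.mem_range.2 hj))
  rw [Nat.descFactorial_eq_factorial_mul_choose] at h1
  exact (hp.dvd_mul.1 h1).resolve_left (fun h => by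
    have := (hp.dvd_factorial).1 h
    omega)

theorem of_prime {n k p : ℕ} (hp : p.Prime) (hkn : 2 * k ≤ n) (h1 : n - k < p) (h2 : p ≤ n) :
    ∃ p, p.Prime ∧ k < p ∧ p ∣ n.choose k :=
  ⟨p, hp, by omega, dvd_choose_of (j := n - p) hp (by omega) (by omega)
    (by rw [Nat.sub_sub_self h2])⟩

theorem gap14 (x : ℕ) (h1 : 14 ≤ x) (h2 : x < 400) : ∃ p, p.Prime ∧ x < p ∧ p ≤ x + 14 := by
  obtain ⟨p, hp, h3, h4⟩ := chain_spec _ _ _ _ _ chain14 x h1 h2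
  exact ⟨p, prime_of_gcd PQ_spec (by omega) (by omega) hp, h3, h4⟩

theorem gap72 (x : ℕ) (h1 : 14 ≤ x) (h2 : x < 65537) : ∃ p, p.Prime ∧ x < p ∧ p ≤ x + 72 := by
  rcases lt_or_ge x 400 with h | h
  · obtain ⟨p, hp, h3, h4⟩ := gap14 x h1 h
    exact ⟨p, hp, h3, by omega⟩
  obtain ⟨p, hp, h3, h4⟩ := chain_spec _ _ _ _ _ chain72 x (by omega) h2
  exact ⟨p, prime_of_gcd PP_spec (by omega) (by omega) hp, h3, h4⟩

theorem syl_small {n k : ℕ} (hk : 0 < k) (hk2 : k < 1024) (hkn : 2 * k ≤ n) :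
    ∃ p, p.Prime ∧ k < p ∧ p ∣ n.choose k := by
  by_contra hcon
  have hcon' : ∀ p, p.Prime → k < p → ¬ p ∣ n.choose k := fun p h1 h2 h3 => hcon ⟨p, h1, h2, h3⟩
  apply hcon
  rcases Nat.lt_or_ge k 2 with h1 | h2
  · obtain rfl : k = 1 := by omega
    exact ⟨n.minFac, Nat.minFac_prime (by omega), (Nat.minFac_prime (by omega)).one_lt,
      by simpa using Nat.minFac_dvd n⟩
  have e1 := E1 hk (by omega) hcon'
  rcases Nat.lt_or_ge k 72 with h72 | h72
  · obtain ⟨hp1, hp2⟩ := pichk k h72 h2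
    have hn : n < 400 := n_lt (by omega) hp1 e1 hp2
    rcases Nat.lt_or_ge k 14 with h14 | h14
    · obtain ⟨j, hj, hb⟩ := smallchk k h14 n
        (n_lt (by omega) hp1 e1 (pichk' k h14 h2).2) hk hkn
      obtain ⟨p, hp, h4, h5⟩ := hasBig_spec _ _ hb
      exact ⟨p, hp, h4, dvd_choose_of hp h4 hj h5⟩
    · obtain ⟨p, hp, h4, h5⟩ := gap14 (n - k) (by omega) (by omega)
      exact of_prime hp hkn h4 (by omega)
  · have hpi := pi_le_6 k (by omega)
    have h8 : 8 * Nat.primeCounting k ≤ 3 * k := by omega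
    have hn : n ≤ 65536 := by
      by_contra hc
      push Not at hc
      have h3 : n ^ (5 * k) * n ^ (3 * k) ≤ k ^ (8 * k) * n ^ (3 * k) := by
        calc n ^ (5 * k) * n ^ (3 * k) = (n ^ k) ^ 8 := by rw [← pow_add, ← pow_mul]; congr 1; ring
          _ ≤ (k ^ k * n ^ Nat.primeCounting k) ^ 8 := Nat.pow_le_pow_left e1 8
          _ = k ^ (8 * k) * n ^ (8 * Nat.primeCounting k) := by
            rw [mul_pow, ← pow_mul, ← pow_mul, mul_comm k, mul_comm (Nat.primeCounting k)]
          _ ≤ _ := Nat.mul_le_mul_left _ (Nat.pow_le_pow_right (by omega) h8)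
      have h4 := Nat.le_of_mul_le_mul_right h3 (pow_pos (by omega) _)
      rw [pow_mul, pow_mul] at h4
      have h5 := (Nat.pow_le_pow_iff_left (by omega)).1 h4
      have h6 : k ^ 8 < 1024 ^ 8 := Nat.pow_lt_pow_left hk2 (by norm_num)
      have h7 : 65536 ^ 5 ≤ n ^ 5 := Nat.pow_le_pow_left hc.le 5
      norm_num at h6 h7
      omega
    obtain ⟨p, hp, h4, h5⟩ := gap72 (n - k) (by omega) (by omega)
    exact of_prime hp hkn h4 (by omega)

theorem log_le_aux {t : ℝ} (ht : 2 ≤ t) : Real.log t ≤ (t - 1) * Real.log 2 := by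
  have h1 : Real.log (t / 2) ≤ t / 2 - 1 := Real.log_le_sub_one_of_pos (by linarith)
  rw [Real.log_div (by linarith) (by norm_num)] at h1
  have h2 := Real.log_two_gt_d9
  nlinarith

theorem log_three_half : 29 / 50 * Real.log 2 ≤ Real.log (3 / 2) := by
  have h : Real.log ((2 : ℝ) ^ 29) ≤ Real.log ((3 / 2 : ℝ) ^ 50) :=
    Real.log_le_log (by norm_num) (by norm_num)
  rw [Real.log_pow, Real.log_pow] at h
  push_cast at h
  linarith

theorem syl_large {n k : ℕ} (hk : 1024 ≤ k) (hkn : 2 * k ≤ n) :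
    ∃ p, p.Prime ∧ k < p ∧ p ∣ n.choose k := by
  by_contra hcon
  have hcon' : ∀ p, p.Prime → k < p → ¬ p ∣ n.choose k := fun p h1 h2 h3 => hcon ⟨p, h1, h2, h3⟩
  clear hcon
  have e1 := E1 (by omega) (by omega) hcon'
  have e2 := choose_le_E2 (by omega) hkn hcon'
  have hn0 : 0 < n := by omega
  have h75 : n ^ 5 ≤ k ^ 7 := by
    have hpi := pi_le_30 k (by omega)
    have h8 : 7 * Nat.primeCounting k ≤ 2 * k := by omega
    have h3 : n ^ (5 * k) * n ^ (2 * k) ≤ k ^ (7 * k) * n ^ (2 * k) := by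
      calc n ^ (5 * k) * n ^ (2 * k) = (n ^ k) ^ 7 := by rw [← pow_add, ← pow_mul]; congr 1; ring
        _ ≤ (k ^ k * n ^ Nat.primeCounting k) ^ 7 := Nat.pow_le_pow_left e1 7
        _ = k ^ (7 * k) * n ^ (7 * Nat.primeCounting k) := by
          rw [mul_pow, ← pow_mul, ← pow_mul, mul_comm k, mul_comm (Nat.primeCounting k)]
        _ ≤ _ := Nat.mul_le_mul_left _ (Nat.pow_le_pow_right (by omega) h8)
    have h4 := Nat.le_of_mul_le_mul_right h3 (pow_pos (by omega) _)
    rw [pow_mul, pow_mul] at h4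
    exact (Nat.pow_le_pow_iff_left (by omega)).1 h4
  have hs30 : 30 ≤ Nat.sqrt n := Nat.le_sqrt.2 (by omega)
  have hpi := pi_le_30 _ hs30
  set ρ := Nat.primeCounting (Nat.sqrt n) with hρ
  have hpiR : 15 * (ρ : ℝ) ≤ 150 + 4 * (Nat.sqrt n : ℝ) := by exact_mod_cast hpi
  have hsq : (Nat.sqrt n : ℝ) ^ 2 ≤ n := by exact_mod_cast Nat.sqrt_le' n
  obtain ⟨t, ht2, htk⟩ : ∃ t : ℝ, 2 ≤ t ∧ t ^ 10 = k := by
    refine ⟨(k : ℝ) ^ ((1 : ℝ) / 10), ?_, ?_⟩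
    · have : ((1024 : ℝ)) ^ ((1 : ℝ) / 10) ≤ (k : ℝ) ^ ((1 : ℝ) / 10) :=
        Real.rpow_le_rpow (by norm_num) (by exact_mod_cast hk) (by norm_num)
      refine le_trans (le_of_eq ?_) this
      rw [show (1024 : ℝ) = 2 ^ (10 : ℝ) by norm_num, ← Real.rpow_mul (by norm_num)]
      norm_num
    · rw [← Real.rpow_natCast, ← Real.rpow_mul (by positivity)]
      norm_num
  have hL := Real.log_two_gt_d9
  have hL0 : 0 < Real.log 2 := by linarith
  have hlt := log_le_aux ht2
  have hnR : (0 : ℝ) < n := by exact_mod_cast hn0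
  have hlogk : Real.log k ≤ 10 * (t - 1) * Real.log 2 := by
    rw [← htk, Real.log_pow]; push_cast; linarith
  obtain ⟨u, rfl⟩ : ∃ u, t = 2 + u := ⟨t - 2, by ring⟩
  have hu : 0 ≤ u := by linarith
  rcases lt_or_ge n (8 * k) with h8 | h8
  · have h1 : 3 ^ k ≤ 2 * k * n ^ ρ * 2 ^ k := by
      have h2 := lower (by omega) hkn
      have h3 : 4 ^ (min k (n / 3)) * 3 ^ k ≤ 4 ^ (min k (n / 3)) * (2 * k * n ^ ρ * 2 ^ k) := by
        calc _ ≤ _ := h2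
          _ ≤ 2 * k * (n ^ ρ * 4 ^ (min k (n / 3))) * 2 ^ k := by gcongr
          _ = _ := by ring
      exact Nat.le_of_mul_le_mul_left h3 (by positivity)
    have h1R : (3 / 2 : ℝ) ^ k ≤ 2 * k * n ^ ρ := by
      rw [div_pow, div_le_iff₀ (by positivity)]
      exact_mod_cast h1
    have hkR : (0 : ℝ) < k := by exact_mod_cast (by omega : 0 < k)
    have h2 := Real.log_le_log (by positivity) h1R
    rw [Real.log_pow, Real.log_mul (by positivity) (by positivity),
      Real.log_mul (by norm_num) (by positivity), Real.log_pow] at h2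
    have h8R : (n : ℝ) ≤ 8 * k := by exact_mod_cast h8.le
    have hlogn : Real.log n ≤ (3 + 10 * (2 + u - 1)) * Real.log 2 := by
      have := Real.log_le_log hnR h8R
      rw [Real.log_mul (by norm_num) (by positivity), show (8 : ℝ) = 2 ^ 3 by norm_num,
        Real.log_pow] at this
      push_cast at this
      linarith
    have hs : (Nat.sqrt n : ℝ) ≤ 2.83 * (2 + u) ^ 5 := by
      apply le_of_sq_le_sq _ (by positivity)
      refine hsq.trans (h8R.trans ?_)
      rw [← htk]
      have : (0 : ℝ) ≤ (2 + u) ^ 10 := by positivity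
      nlinarith
    have h3 : (ρ : ℝ) ≤ 10 + 4 / 15 * (2.83 * (2 + u) ^ 5) := by linarith
    have h4 : (ρ : ℝ) * Real.log n ≤
        (10 + 4 / 15 * (2.83 * (2 + u) ^ 5)) * ((3 + 10 * (2 + u - 1)) * Real.log 2) :=
      mul_le_mul h3 hlogn (Real.log_nonneg (by exact_mod_cast hn0)) (by positivity)
    have h5 := mul_le_mul_of_nonneg_left log_three_half hkR.le
    have h6 : (2 + u) ^ 10 * (29 / 50) * Real.log 2 ≤
        (1 + 10 * (2 + u - 1) + (10 + 4 / 15 * (2.83 * (2 + u) ^ 5)) * (3 + 10 * (2 + u - 1)))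
          * Real.log 2 := by
      rw [htk]; linarith
    have h7 := le_of_mul_le_mul_right h6 hL0
    have h9 : 0 < (2 + u) ^ 10 * (29 / 50) -
      (1 + 10 * (2 + u - 1) + (10 + 4 / 15 * (2.83 * (2 + u) ^ 5)) * (3 + 10 * (2 + u - 1))) := by
      ring_nf
      positivity
    linarith
  · have h1 : 2 ^ k ≤ n ^ ρ := by
      have h2 := pow_le_pow_mul_choose k n (by omega)
      have h3 : (4 ^ k * k ^ k) * 2 ^ k ≤ (4 ^ k * k ^ k) * n ^ ρ := by
        calc (4 ^ k * k ^ k) * 2 ^ k = (8 * k) ^ k := by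
              rw [mul_pow, show 8 = 4 * 2 by norm_num, mul_pow]; ring
          _ ≤ n ^ k := Nat.pow_le_pow_left h8 k
          _ ≤ k ^ k * n.choose k := h2
          _ ≤ k ^ k * (n ^ ρ * 4 ^ (min k (n / 3))) := Nat.mul_le_mul_left _ e2
          _ ≤ k ^ k * (n ^ ρ * 4 ^ k) := by
              gcongr
              · norm_num
              · exact min_le_left _ _
          _ = _ := by ring
      exact Nat.le_of_mul_le_mul_left h3 (by have : 0 < k := by omega
                                             positivity)
    have h1R : (2 : ℝ) ^ k ≤ n ^ ρ := by exact_mod_cast h1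
    have h2 := Real.log_le_log (by positivity) h1R
    rw [Real.log_pow, Real.log_pow] at h2
    have hn14 : (n : ℝ) ≤ (2 + u) ^ 14 := by
      have h75R : (n : ℝ) ^ 5 ≤ k ^ 7 := by exact_mod_cast h75
      rw [← htk] at h75R
      apply le_of_pow_le_pow_left₀ (n := 5) (by norm_num) (by positivity)
      refine h75R.trans (le_of_eq ?_)
      rw [← pow_mul, ← pow_mul]
    have hlogn : Real.log n ≤ 14 * (2 + u - 1) * Real.log 2 := by
      have := Real.log_le_log hnR hn14
      rw [Real.log_pow] at this
      push_cast at this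
      linarith
    have hs : (Nat.sqrt n : ℝ) ≤ (2 + u) ^ 7 := by
      apply le_of_sq_le_sq _ (by positivity)
      refine hsq.trans (hn14.trans (le_of_eq ?_))
      rw [← pow_mul]
    have h3 : (ρ : ℝ) ≤ 10 + 4 / 15 * (2 + u) ^ 7 := by linarith
    have h4 : (ρ : ℝ) * Real.log n ≤
        (10 + 4 / 15 * (2 + u) ^ 7) * (14 * (2 + u - 1) * Real.log 2) :=
      mul_le_mul h3 hlogn (Real.log_nonneg (by exact_mod_cast hn0)) (by positivity)
    have h6 : (2 + u) ^ 10 * Real.log 2 ≤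
        ((10 + 4 / 15 * (2 + u) ^ 7) * (14 * (2 + u - 1))) * Real.log 2 := by
      rw [htk]; linarith
    have h7 := le_of_mul_le_mul_right h6 hL0
    have h9 : 0 < (2 + u) ^ 10 - (10 + 4 / 15 * (2 + u) ^ 7) * (14 * (2 + u - 1)) := by
      ring_nf
      positivity
    linarith

/-- Sylvester's theorem. -/
theorem sylvester {n k : ℕ} (hk : 0 < k) (hkn : 2 * k ≤ n) :
    ∃ p, p.Prime ∧ k < p ∧ p ∣ n.choose k := by
  rcases lt_or_ge k 1024 with h | h
  · exact syl_small hk h hkn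
  · exact syl_large h hkn

theorem exists_key {f : ℕ → ℕ} {s : Finset ℕ} (hs : s.Nonempty) :
    ∃ i ∈ s, (∀ j ∈ s, f i ≤ f j) ∧ ∀ j ∈ s, i < j → f i < f j := by
  classical
  obtain ⟨i0, hi0, hmin⟩ := Finset.exists_min_image s f hs
  have hne : (s.filter (fun j => f j = f i0)).Nonempty := ⟨i0, by simp [hi0]⟩
  refine ⟨(s.filter (fun j => f j = f i0)).max' hne, ?_⟩
  have hm := Finset.max'_mem _ hne
  have hle := fun j hj => Finset.le_max' (s.filter (fun j => f j = f i0)) j hj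
  set i := (s.filter (fun j => f j = f i0)).max' hne
  rw [Finset.mem_filter] at hm
  refine ⟨hm.1, fun j hj => hm.2 ▸ hmin j hj, fun j hj hij => ?_⟩
  rcases (hmin j hj).lt_or_eq with h | h
  · omega
  · have := hle j (by rw [Finset.mem_filter]; exact ⟨hj, h.symm⟩)
    omega

theorem newton {O : Type*} [CommRing O] [IsDomain O] [WfDvdMonoid O] {π : O} (hπ : Prime π)
    {k N : ℕ} (hk : 0 < k) (G H : O[X])
    (hG0 : π ∣ G.coeff 0) (hGs : ∃ s ≤ k, ¬ π ∣ G.coeff s)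
    (hF0 : ¬ π ^ (N + 1) ∣ (G * H).coeff 0)
    (hF : ∀ j, 0 < j → ∃ E, π ^ E ∣ (G * H).coeff j ∧ k * N < k * E + j) : False := by
  classical
  have hfin : ∀ a : O, a ≠ 0 → FiniteMultiplicity π a := fun a ha =>
    FiniteMultiplicity.of_not_isUnit hπ.not_isUnit ha
  have hGH0 : G.coeff 0 * H.coeff 0 ≠ 0 := by
    intro h
    apply hF0
    rw [mul_coeff_zero, h]; exact dvd_zero _
  have hG0' : G.coeff 0 ≠ 0 := left_ne_zero_of_mul hGH0
  have hH0' : H.coeff 0 ≠ 0 := right_ne_zero_of_mul hGH0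
  obtain ⟨s, hs, hs1, hs2⟩ := exists_key (f := fun i => k * multiplicity π (G.coeff i) + i)
    (s := G.support) ⟨0, by simpa using hG0'⟩
  obtain ⟨t, ht, ht1, ht2⟩ := exists_key (f := fun i => k * multiplicity π (H.coeff i) + i)
    (s := H.support) ⟨0, by simpa using hH0'⟩
  simp only [mem_support_iff] at hs hs1 hs2 ht ht1 ht2
  set a := multiplicity π (G.coeff s) with ha
  set b := multiplicity π (H.coeff t) with hb
  have hs0 : 0 < s := by
    by_contra hc
    obtain rfl : s = 0 := by omega
    obtain ⟨s0, hs0k, hs0⟩ := hGs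
    have ha1 : 1 ≤ a := by
      rw [ha]
      exact (hfin _ hG0').le_multiplicity_of_pow_dvd (by simpa using hG0)
    have hpos : 0 < s0 := by
      rcases Nat.eq_zero_or_pos s0 with rfl | h
      · exact absurd hG0 hs0
      · exact h
    have h := hs2 s0 (fun h => hs0 (h ▸ dvd_zero _)) hpos
    rw [multiplicity_eq_zero.2 hs0] at h
    nlinarith
  have hnot : ¬ π ^ (a + b + 1) ∣ (G * H).coeff (s + t) := by
    rw [coeff_mul]
    rw [← Finset.add_sum_erase _ _ (Finset.HasAntidiagonal.mem_antidiagonal.2 (rfl : (s, t).1 + (s, t).2 = s + t))]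
    intro hd
    have hrest : π ^ (a + b + 1) ∣ ∑ x ∈ (Finset.HasAntidiagonal.antidiagonal (s + t)).erase (s, t),
        G.coeff x.1 * H.coeff x.2 := by
      apply Finset.dvd_sum
      rintro ⟨i, j⟩ hx
      rw [Finset.mem_erase, Finset.HasAntidiagonal.mem_antidiagonal] at hx
      obtain ⟨hne, hij⟩ := hx
      simp only at hij ⊢
      by_cases hGi : G.coeff i = 0
      · rw [hGi, zero_mul]; exact dvd_zero _
      by_cases hHj : H.coeff j = 0
      · rw [hHj, mul_zero]; exact dvd_zero _
      have hsum : a + b + 1 ≤ multiplicity π (G.coeff i) + multiplicity π (H.coeff j) := by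
        have h1 := hs1 i hGi
        have h2 := ht1 j hHj
        have h3 : k * (a + b) < k * (multiplicity π (G.coeff i) + multiplicity π (H.coeff j)) := by
          rw [mul_add, mul_add]
          rcases lt_trichotomy s i with h | h | h
          · have := hs2 i hGi h
            omega
          · exfalso; apply hne
            rw [← h] at hij ⊢
            rw [Nat.add_left_cancel hij]
          · have := ht2 j hHj (by omega)
            omega
        have := Nat.lt_of_mul_lt_mul_left h3
        omega
      refine (pow_dvd_pow _ hsum).trans ?_
      rw [pow_add]
      exact mul_dvd_mul (pow_multiplicity_dvd _ _) (pow_multiplicity_dvd _ _)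
    have hmain := (dvd_add_left hrest).1 hd
    have hfm : FiniteMultiplicity π (G.coeff s * H.coeff t) := hfin _ (mul_ne_zero hs ht)
    have h5 := hfm.le_multiplicity_of_pow_dvd hmain
    rw [multiplicity_mul hπ hfm] at h5
    omega
  obtain ⟨E, hE1, hE2⟩ := hF (s + t) (by omega)
  have hE : E ≤ a + b := by
    by_contra hc
    exact hnot ((pow_dvd_pow _ (by omega)).trans hE1)
  have h1 := hs1 0 hG0'
  have h2 := ht1 0 hH0'
  have h3 : multiplicity π (G.coeff 0) + multiplicity π (H.coeff 0) ≤ N := by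
    by_contra hc
    apply hF0
    rw [mul_coeff_zero]
    refine (pow_dvd_pow _ (by omega : N + 1 ≤ multiplicity π (G.coeff 0) + multiplicity π (H.coeff 0))).trans ?_
    rw [pow_add]
    exact mul_dvd_mul (pow_multiplicity_dvd _ _) (pow_multiplicity_dvd _ _)
  nlinarith

section Core
variable {p : ℕ} [Fact p.Prime] {φ : ℤ[X]}

theorem eval2_root_mk {R : Type*} [CommRing R] (f g : R[X]) :
    g.eval₂ (AdjoinRoot.of f) (AdjoinRoot.root f) = AdjoinRoot.mk f g := by
  rw [← AdjoinRoot.aeval_eq]; rfl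

noncomputable def psi (p : ℕ) (φ : ℤ[X]) :
    AdjoinRoot φ →+* AdjoinRoot (φ.map (Int.castRingHom (ZMod p))) :=
  AdjoinRoot.map (Int.castRingHom (ZMod p)) φ _ dvd_rfl

theorem psi_mk (g : ℤ[X]) :
    psi p φ (AdjoinRoot.mk φ g) = AdjoinRoot.mk _ (g.map (Int.castRingHom (ZMod p))) := by
  rw [psi, AdjoinRoot.map, AdjoinRoot.lift_mk, ← eval₂_map, eval2_root_mk]

theorem C_dvd_of_map_eq_zero (r : ℤ[X]) (h : r.map (Int.castRingHom (ZMod p)) = 0) :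
    C (p : ℤ) ∣ r := by
  rw [C_dvd_iff_dvd_coeff]
  intro i
  have := congrArg (fun q => coeff q i) h
  simp only [coeff_map, coeff_zero, eq_intCast] at this
  exact (ZMod.intCast_zmod_eq_zero_iff_dvd _ _).1 this

theorem psi_eq_zero_iff (x : AdjoinRoot φ) : psi p φ x = 0 ↔ (p : AdjoinRoot φ) ∣ x := by
  constructor
  · intro h
    obtain ⟨g, rfl⟩ := AdjoinRoot.mk_surjective x
    rw [psi_mk, AdjoinRoot.mk_eq_zero] at h
    obtain ⟨q, hq⟩ := h
    obtain ⟨q', rfl⟩ := Polynomial.map_surjective (Int.castRingHom (ZMod p))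
      (ZMod.ringHom_surjective _) q
    obtain ⟨r, hr⟩ := C_dvd_of_map_eq_zero (p := p) (g - φ * q') (by
      rw [Polynomial.map_sub, Polynomial.map_mul, hq, sub_self])
    have : g = φ * q' + C (p : ℤ) * r := by rw [← hr]; ring
    rw [this]
    refine ⟨AdjoinRoot.mk φ r, ?_⟩
    simp
  · rintro ⟨y, rfl⟩
    rw [map_mul, map_natCast]
    have : ((p : ℕ) : AdjoinRoot (φ.map (Int.castRingHom (ZMod p)))) = 0 := by
      have h := map_natCast (AdjoinRoot.of (φ.map (Int.castRingHom (ZMod p)))) p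
      rw [← h]; simp
    rw [this, zero_mul]

theorem phi_prime (hm : φ.Monic) (hirr : Irreducible (φ.map (Int.castRingHom (ZMod p)))) :
    Prime φ :=
  (hm.irreducible_of_irreducible_map (Int.castRingHom (ZMod p)) φ hirr).prime

theorem p_prime (hm : φ.Monic) (hirr : Irreducible (φ.map (Int.castRingHom (ZMod p)))) :
    Prime (p : AdjoinRoot φ) := by
  have := AdjoinRoot.isDomain_of_prime (phi_prime hm hirr)
  have : Fact (Irreducible (φ.map (Int.castRingHom (ZMod p)))) := ⟨hirr⟩
  have hdeg : φ.degree ≠ 0 := by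
    intro h
    have := hirr.degree_pos
    rw [hm.degree_map, h] at this
    exact lt_irrefl _ this
  refine ⟨?_, ?_, ?_⟩
  · intro h
    have h1 : AdjoinRoot.of φ (p : ℤ) = 0 := by rw [map_natCast]; exact h
    rw [map_eq_zero_iff _ (AdjoinRoot.of.injective_of_degree_ne_zero hdeg)] at h1
    exact (Fact.out : p.Prime).ne_zero (by exact_mod_cast h1)
  · intro h
    have h1 := (psi_eq_zero_iff (p := p) (1 : AdjoinRoot φ)).2 (h.dvd)
    rw [map_one] at h1
    exact one_ne_zero h1
  · intro a b h
    rw [← psi_eq_zero_iff, map_mul, mul_eq_zero] at h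
    rwa [← psi_eq_zero_iff, ← psi_eq_zero_iff]

noncomputable def tau (φ : ℤ[X]) : ℤ[X] →+* (AdjoinRoot φ)[X] :=
  ((taylorAlgHom (AdjoinRoot.root φ)) : (AdjoinRoot φ)[X] →+* (AdjoinRoot φ)[X]).comp
    (mapRingHom (AdjoinRoot.of φ))

theorem tau_apply (f : ℤ[X]) : tau φ f = taylor (AdjoinRoot.root φ) (f.map (AdjoinRoot.of φ)) := rfl

theorem tau_coeff_zero (f : ℤ[X]) : (tau φ f).coeff 0 = AdjoinRoot.mk φ f := by
  rw [tau_apply, taylor_coeff_zero, eval_map, eval2_root_mk]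

theorem tau_map (f : ℤ[X]) : (tau φ f).map (psi p φ) =
    taylor (AdjoinRoot.root _) ((f.map (Int.castRingHom (ZMod p))).map
      (AdjoinRoot.of (φ.map (Int.castRingHom (ZMod p))))) := by
  rw [tau_apply, taylor_apply, taylor_apply, Polynomial.map_comp, Polynomial.map_map,
    Polynomial.map_map]
  have h1 : psi p φ (AdjoinRoot.root φ) = AdjoinRoot.root _ := by
    have := psi_mk (p := p) (φ := φ) X
    simpa using this
  rw [Polynomial.map_add, map_X, map_C, h1]
  congr 2
  exact RingHom.ext_int _ _

theorem condB (hirr : Irreducible (φ.map (Int.castRingHom (ZMod p)))) (G : ℤ[X]) {k : ℕ}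
    (hG : G.map (Int.castRingHom (ZMod p)) ≠ 0)
    (hk : (G.map (Int.castRingHom (ZMod p))).natDegree ≤
      k * (φ.map (Int.castRingHom (ZMod p))).natDegree) :
    ∃ s ≤ k, ¬ (p : AdjoinRoot φ) ∣ (tau φ G).coeff s := by
  have : Fact (Irreducible (φ.map (Int.castRingHom (ZMod p)))) := ⟨hirr⟩
  have hT := tau_map (p := p) (φ := φ) G
  set φ' := φ.map (Int.castRingHom (ZMod p)) with hφ'
  set G' := G.map (Int.castRingHom (ZMod p)) with hG'
  obtain ⟨e, Q, hQ, hGQ⟩ := WfDvdMonoid.max_power_factor hG hirr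
  have hd := hirr.natDegree_pos
  have hek : e ≤ k := by
    have h1 : Q ≠ 0 := by rintro rfl; exact hQ (dvd_zero _)
    have h2 := congrArg natDegree hGQ
    rw [natDegree_mul (pow_ne_zero _ hirr.ne_zero) h1, natDegree_pow] at h2
    have : e * φ'.natDegree ≤ k * φ'.natDegree := by omega
    exact Nat.le_of_mul_le_mul_right this hd
  refine ⟨e, hek, ?_⟩
  rw [← psi_eq_zero_iff, ← coeff_map, hT, hGQ, Polynomial.map_mul, Polynomial.map_pow, taylor_mul,
    taylor_pow]
  set P := taylor (AdjoinRoot.root φ') (φ'.map (AdjoinRoot.of φ')) with hP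
  have hP0 : P.coeff 0 = 0 := by
    rw [hP, taylor_coeff_zero, eval_map, AdjoinRoot.eval₂_root]
  have hP1 : P.coeff 1 ≠ 0 := by
    rw [hP, taylor_coeff_one, derivative_map, eval_map, eval2_root_mk]
    have hsep : φ'.Separable := PerfectField.separable_of_irreducible hirr
    intro h
    rw [AdjoinRoot.mk_eq_zero] at h
    exact hirr.not_isUnit (hsep.isUnit_of_dvd' dvd_rfl h)
  obtain ⟨U, hU⟩ := X_dvd_iff.2 hP0
  have hU0 : U.coeff 0 ≠ 0 := by
    rw [hU, coeff_X_mul] at hP1; exact hP1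
  rw [hU, mul_pow, mul_assoc, coeff_X_pow_mul', if_pos le_rfl, Nat.sub_self, mul_coeff_zero,
    coeff_zero_eq_eval_zero, eval_pow, ← coeff_zero_eq_eval_zero, taylor_coeff_zero, eval_map,
    eval2_root_mk]
  apply mul_ne_zero (pow_ne_zero _ hU0)
  rwa [Ne, AdjoinRoot.mk_eq_zero]

end Core


theorem core_two {p n k : ℕ} [Fact p.Prime] {φ : ℤ[X]} (hm : φ.Monic)
    (hirr : Irreducible (φ.map (Int.castRingHom (ZMod p)))) (hk : 0 < k) (hkp : k < p)
    (hkn : k ≤ n) (hch : p ∣ n.choose k) (b : ℕ → ℤ[X])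
    (hb0 : (b 0).map (Int.castRingHom (ZMod p)) ≠ 0)
    (hb0d : (b 0).degree < φ.degree) (G H : ℤ[X])
    (hF : G * H = ∑ i ∈ Finset.range (n + 1),
        C ((n.factorial / i.factorial : ℕ) : ℤ) * b i * φ ^ i)
    (hG : G.map (Int.castRingHom (ZMod p)) ≠ 0)
    (hGd : (G.map (Int.castRingHom (ZMod p))).natDegree ≤
      k * (φ.map (Int.castRingHom (ZMod p))).natDegree)
    (hH : H.map (Int.castRingHom (ZMod p)) ≠ 0)
    (hHd : (H.map (Int.castRingHom (ZMod p))).natDegree ≤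
      (n - k) * (φ.map (Int.castRingHom (ZMod p))).natDegree) : False := by
  have hdom := AdjoinRoot.isDomain_of_prime (phi_prime hm hirr)
  have hπ := p_prime hm hirr
  have hpp : p.Prime := Fact.out
  -- coprimality of the constant coefficient
  have hb0p : ¬ (p : AdjoinRoot φ) ∣ AdjoinRoot.mk φ (b 0) := by
    rw [← psi_eq_zero_iff, psi_mk, AdjoinRoot.mk_eq_zero]
    intro h
    have h1 := degree_le_of_dvd h hb0
    rw [hm.degree_map] at h1
    exact absurd (lt_of_le_of_lt (h1.trans degree_map_le) hb0d) (lt_irrefl _)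
  have hX : X ∣ tau φ φ := by
    rw [X_dvd_iff, tau_coeff_zero, AdjoinRoot.mk_self]
  have hG0 : (p : AdjoinRoot φ) ∣ (tau φ G).coeff 0 := by
    rw [tau_coeff_zero, ← psi_eq_zero_iff, psi_mk, AdjoinRoot.mk_eq_zero]
    by_contra hnd
    have hdv : (φ.map (Int.castRingHom (ZMod p))) ^ (n - k + 1) ∣
        G.map (Int.castRingHom (ZMod p)) * H.map (Int.castRingHom (ZMod p)) := by
      rw [← Polynomial.map_mul, hF, Polynomial.map_sum]
      apply Finset.dvd_sum
      intro i _
      rw [Polynomial.map_mul, Polynomial.map_mul, Polynomial.map_pow, map_C]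
      by_cases hi : i ≤ n - k
      · have h1 : p ∣ n.factorial / i.factorial := by
          have h2 : n.descFactorial k ∣ n.factorial / i.factorial := by
            rw [Nat.dvd_div_iff_mul_dvd (Nat.factorial_dvd_factorial (by omega))]
            rw [← Nat.factorial_mul_descFactorial hkn]
            exact Nat.mul_dvd_mul_right (Nat.factorial_dvd_factorial hi) _
          refine dvd_trans ?_ h2
          rw [Nat.descFactorial_eq_factorial_mul_choose]
          exact Dvd.dvd.mul_left hch _
        have h3 : (Int.castRingHom (ZMod p)) ((n.factorial / i.factorial : ℕ) : ℤ) = 0 := by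
          rw [map_natCast]
          exact (ZMod.natCast_eq_zero_iff _ _).2 h1
        rw [h3]; simp
      · exact Dvd.dvd.mul_left (pow_dvd_pow _ (by omega)) _
    have h4 := hirr.prime.pow_dvd_of_dvd_mul_left _ hnd hdv
    have h5 := natDegree_le_of_dvd h4 hH
    rw [natDegree_pow] at h5
    have := hirr.natDegree_pos
    nlinarith
  have hGs := condB hirr G hG hGd
  set N := padicValNat p n.factorial with hN
  have hFt : tau φ G * tau φ H = ∑ i ∈ Finset.range (n + 1),
      C ((n.factorial / i.factorial : ℕ) : AdjoinRoot φ) * tau φ (b i) * (tau φ φ) ^ i := by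
    rw [← map_mul, hF, map_sum]
    refine Finset.sum_congr rfl fun i _ => ?_
    have h1 : ∀ m : ℕ, tau φ (C (m : ℤ)) = C (m : AdjoinRoot φ) := by
      intro m; simp
    rw [map_mul, map_mul, map_pow, h1]
  refine newton hπ (N := N) hk (tau φ G) (tau φ H) hG0 hGs ?_ ?_
  · rw [hFt, finsetSum_coeff, Finset.sum_range_succ', Finset.sum_eq_zero, zero_add, pow_zero,
      mul_one, coeff_C_mul, tau_coeff_zero, Nat.factorial_zero, Nat.div_one]
    · intro h
      have h1 := hπ.pow_dvd_of_dvd_mul_right _ hb0p h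
      obtain ⟨m, hm1⟩ := (padicValNat_dvd_iff_le (p := p) (n := N) n.factorial_ne_zero).2 le_rfl
      rw [hm1, pow_succ] at h1
      push_cast at h1
      have h2 := (mul_dvd_mul_iff_left (pow_ne_zero _ hπ.ne_zero)).1 h1
      rw [← psi_eq_zero_iff, map_natCast] at h2
      have : Fact (Irreducible (φ.map (Int.castRingHom (ZMod p)))) := ⟨hirr⟩
      have h3 : p ∣ m := by
        rw [← map_natCast (AdjoinRoot.of (φ.map (Int.castRingHom (ZMod p)))) m,
          map_eq_zero_iff _ (RingHom.injective _)] at h2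
        exact (ZMod.natCast_eq_zero_iff _ _).1 h2
      have h4 : p ^ (N + 1) ∣ n.factorial := by
        rw [hm1, pow_succ]; exact mul_dvd_mul_left _ h3
      rw [padicValNat_dvd_iff_le n.factorial_ne_zero] at h4
      omega
    · intro i _
      obtain ⟨U, hU⟩ := hX
      rw [hU, mul_pow, pow_succ X]
      have : ∀ A B Y Z : (AdjoinRoot φ)[X], A * B * (Y * X * Z) = (A * B * Y * Z) * X := by
        intros; ring
      rw [this, coeff_mul_X_zero]
  · intro j hj
    refine ⟨N - (j - 1) / k, ?_, ?_⟩
    · rw [hFt, finsetSum_coeff]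
      apply Finset.dvd_sum
      intro i hi
      have hin : i ≤ n := by simpa [Nat.lt_succ_iff] using hi
      by_cases hij : i ≤ j
      · rw [mul_assoc, coeff_C_mul]
        apply Dvd.dvd.mul_right
        have h1 : p ^ (N - (j - 1) / k) ∣ n.factorial / i.factorial := by
          have hne : n.factorial / i.factorial ≠ 0 :=
            (Nat.div_pos (Nat.factorial_le hin) (Nat.factorial_pos _)).ne'
          rw [padicValNat_dvd_iff_le hne,
            padicValNat.div_of_dvd (Nat.factorial_dvd_factorial hin)]
          apply Nat.sub_le_sub_left
          rcases Nat.eq_zero_or_pos i with rfl | hi0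
          · simp
          · have h2 := sub_one_mul_padicValNat_factorial_lt_of_ne_zero p (n := i) hi0.ne'
            rw [Nat.le_div_iff_mul_le hk]
            have h3 : k * padicValNat p i.factorial ≤ (p - 1) * padicValNat p i.factorial :=
              Nat.mul_le_mul_right _ (by omega)
            rw [mul_comm]
            omega
        exact_mod_cast Nat.cast_dvd_cast (α := AdjoinRoot φ) h1
      · obtain ⟨U, hU⟩ := hX
        rw [hU, mul_pow, mul_left_comm, coeff_X_pow_mul', if_neg (by omega)]
        exact dvd_zero _
    · have h1 := Nat.mul_div_le (j - 1) k
      have h2 : N ≤ (N - (j - 1) / k) + (j - 1) / k := by omega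
      have h3 := Nat.mul_le_mul_left k h2
      rw [mul_add] at h3
      omega

theorem core_one {n : ℕ} (hn : 2 ≤ n) {φ : ℤ[X]} (hm : φ.Monic)
    (hirr : ∀ p : ℕ, p.Prime → p ≤ n → Irreducible (φ.map (Int.castRingHom (ZMod p))))
    (b : ℕ → ℤ[X]) (an : ℤ) (hbn : b n = C an)
    (hdeg : ∀ i < n, (b i).degree < φ.degree)
    (han : IsCoprime an (n.factorial : ℤ))
    (ha0 : IsCoprime ((b 0).content) (n.factorial : ℤ)) (G H : ℤ[X])
    (hF : G * H = ∑ i ∈ Finset.range (n + 1),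
        C ((n.factorial / i.factorial : ℕ) : ℤ) * b i * φ ^ i)
    (hlc : G.leadingCoeff * H.leadingCoeff = an)
    (hG : 0 < G.natDegree) (hH : 0 < H.natDegree) : False := by
  have hcop : ∀ p : ℕ, p.Prime → p ≤ n → ∀ z : ℤ, IsCoprime z (n.factorial : ℤ) →
      ¬ (p : ℤ) ∣ z := by
    intro p hp hpn z hz hd
    have h1 : (p : ℤ) ∣ (n.factorial : ℤ) := by exact_mod_cast hp.dvd_factorial.2 hpn
    have := hz.isUnit_of_dvd' hd h1
    rw [Int.isUnit_iff] at this
    have := hp.two_le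
    omega
  have hlcp : ∀ p : ℕ, p.Prime → p ≤ n → ∀ Q R : ℤ[X], Q.leadingCoeff * R.leadingCoeff = an →
      Q.map (Int.castRingHom (ZMod p)) ≠ 0 ∧
        (Q.map (Int.castRingHom (ZMod p))).natDegree = Q.natDegree := by
    intro p hp hpn Q R hQR
    have h1 : (Int.castRingHom (ZMod p)) Q.leadingCoeff ≠ 0 := by
      intro h
      rw [eq_intCast, ZMod.intCast_zmod_eq_zero_iff_dvd] at h
      exact hcop p hp hpn an han (hQR ▸ h.mul_right _)
    refine ⟨?_, natDegree_map_of_leadingCoeff_ne_zero _ h1⟩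
    intro h
    apply h1
    have := congrArg (fun q => coeff q Q.natDegree) h
    simp only [coeff_map, coeff_zero] at this
    exact this
  -- the main combination
  have key : ∀ (k : ℕ) (G H : ℤ[X]), 0 < k → 2 * k ≤ n → G.leadingCoeff * H.leadingCoeff = an →
      G * H = ∑ i ∈ Finset.range (n + 1),
        C ((n.factorial / i.factorial : ℕ) : ℤ) * b i * φ ^ i →
      G.natDegree = k * φ.natDegree → H.natDegree = (n - k) * φ.natDegree → False := by
    intro k G H hk hkn hlc hF hG hH
    obtain ⟨p, hp, hkp, hch⟩ := sylvester hk hkn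
    have : Fact p.Prime := ⟨hp⟩
    have hpn : p ≤ n := by
      rw [← hp.dvd_factorial]
      refine hch.trans ⟨k.factorial * (n - k).factorial, ?_⟩
      rw [← Nat.choose_mul_factorial_mul_factorial (show k ≤ n by omega), mul_assoc]
    have hG1 := hlcp p hp hpn G H hlc
    have hH1 := hlcp p hp hpn H G (by rw [mul_comm]; exact hlc)
    refine core_two hm (hirr p hp hpn) hk hkp (by omega) hch b ?_ (hdeg 0 (by omega)) G H hF
      hG1.1 ?_ hH1.1 ?_
    · intro h
      have h1 := C_dvd_of_map_eq_zero _ h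
      rw [← dvd_content_iff_C_dvd] at h1
      exact hcop p hp hpn _ ha0 h1
    · rw [hG1.2, hG, hm.natDegree_map]
    · rw [hH1.2, hH, hm.natDegree_map]
  set q := n.minFac with hq
  have hqp : q.Prime := Nat.minFac_prime (by omega)
  have hqn : q ≤ n := Nat.minFac_le (by omega)
  have : Fact q.Prime := ⟨hqp⟩
  have hφq := hirr q hqp hqn
  have hd := hφq.natDegree_pos
  rw [hm.natDegree_map] at hd
  have hG1 := hlcp q hqp hqn G H hlc
  have hH1 := hlcp q hqp hqn H G (by rw [mul_comm]; exact hlc)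
  have hmod : G.map (Int.castRingHom (ZMod q)) * H.map (Int.castRingHom (ZMod q)) =
      C ((an : ℤ) : ZMod q) * (φ.map (Int.castRingHom (ZMod q))) ^ n := by
    rw [← Polynomial.map_mul, hF, Polynomial.map_sum, Finset.sum_range_succ,
      Finset.sum_eq_zero, zero_add]
    · rw [hbn, Nat.div_self n.factorial_pos]
      simp
    · intro i hi
      have hin : i < n := Finset.mem_range.1 hi
      have h1 : q ∣ n.factorial / i.factorial := by
        refine (Nat.minFac_dvd n).trans ?_
        rw [Nat.dvd_div_iff_mul_dvd (Nat.factorial_dvd_factorial hin.le)]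
        obtain ⟨m, rfl⟩ : ∃ m, n = m + 1 := ⟨n - 1, by omega⟩
        rw [Nat.factorial_succ, mul_comm]
        exact Nat.mul_dvd_mul_left _ (Nat.factorial_dvd_factorial (by omega))
      have h3 : (Int.castRingHom (ZMod q)) ((n.factorial / i.factorial : ℕ) : ℤ) = 0 := by
        rw [map_natCast]
        exact (ZMod.natCast_eq_zero_iff _ _).2 h1
      rw [Polynomial.map_mul, Polynomial.map_mul, map_C, h3]; simp
  have hanq : ((an : ℤ) : ZMod q) ≠ 0 := by
    rw [Ne, ZMod.intCast_zmod_eq_zero_iff_dvd]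
    exact hcop q hqp hqn an han
  have hdvd : ∀ Q R : (ZMod q)[X], Q * R =
      C ((an : ℤ) : ZMod q) * (φ.map (Int.castRingHom (ZMod q))) ^ n →
      ∃ k, Q.natDegree = k * φ.natDegree := by
    intro Q R h
    have h1 : Q ∣ (φ.map (Int.castRingHom (ZMod q))) ^ n := by
      rw [← (isUnit_C.2 hanq.isUnit).dvd_mul_left, ← h]
      exact dvd_mul_right _ _
    obtain ⟨k, _, hk⟩ := (dvd_prime_pow hφq.prime n).1 h1
    refine ⟨k, ?_⟩
    rw [natDegree_eq_of_degree_eq (degree_eq_degree_of_associated hk), natDegree_pow,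
      hm.natDegree_map]
  obtain ⟨k, hk⟩ := hdvd _ _ hmod
  obtain ⟨l, hl⟩ := hdvd _ _ ((mul_comm _ _).trans hmod)
  have hsum : k + l = n := by
    have h1 := congrArg natDegree hmod
    rw [natDegree_mul hG1.1 hH1.1, natDegree_C_mul hanq, natDegree_pow, hk, hl,
      hm.natDegree_map, ← add_mul] at h1
    exact Nat.eq_of_mul_eq_mul_right hd h1
  rw [hG1.2] at hk
  rw [hH1.2] at hl
  have hk0 : 0 < k := by
    rcases Nat.eq_zero_or_pos k with rfl | h
    · omega
    · exact h
  have hl0 : 0 < l := by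
    rcases Nat.eq_zero_or_pos l with rfl | h
    · omega
    · exact h
  rcases le_total k l with h | h
  · exact key k G H hk0 (by omega) hlc hF hk (by rw [hl, ← hsum, Nat.add_sub_cancel_left])
  · exact key l H G hl0 (by omega) (by rw [mul_comm]; exact hlc) (by rw [mul_comm]; exact hF) hl
      (by rw [hk, ← hsum, Nat.add_sub_cancel])

theorem main_aux (n : ℕ) (hn : 2 ≤ n) (φ : ℤ[X]) (hm : φ.Monic)
    (hirr : ∀ p : ℕ, p.Prime → p ≤ n → Irreducible (φ.map (Int.castRingHom (ZMod p))))
    (a : ℕ → ℤ[X]) (an : ℤ)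
    (hdeg : ∀ i < n, (a i).degree < φ.degree)
    (han : IsCoprime an (n.factorial : ℤ))
    (ha0 : IsCoprime ((a 0).content) (n.factorial : ℤ)) :
    Irreducible ((∑ i ∈ Finset.range n,
        C ((n.factorial / i.factorial : ℕ) : ℤ) * a i * φ ^ i
      + C an * φ ^ n).map (Int.castRingHom ℚ)) := by
  have hd : 0 < φ.natDegree := by
    have : Fact (Nat.Prime 2) := ⟨Nat.prime_two⟩
    have := (hirr 2 Nat.prime_two hn).natDegree_pos
    rwa [hm.natDegree_map] at this
  have han0 : an ≠ 0 := by
    rintro rfl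
    rw [isCoprime_zero_left, Int.isUnit_iff] at han
    have := Nat.self_le_factorial n
    omega
  set S := ∑ i ∈ Finset.range n, C ((n.factorial / i.factorial : ℕ) : ℤ) * a i * φ ^ i with hS
  set F := S + C an * φ ^ n with hFdef
  have hdφ : (C an * φ ^ n).degree = ((n * φ.natDegree : ℕ) : WithBot ℕ) := by
    rw [degree_C_mul han0, degree_pow, degree_eq_natDegree hm.ne_zero]
    simp
  have hSd : S.degree < (C an * φ ^ n).degree := by
    rw [hdφ]
    rw [degree_lt_iff_coeff_zero]
    intro m hmm
    rw [hS, finsetSum_coeff]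
    apply Finset.sum_eq_zero
    intro i hi
    have hin : i < n := Finset.mem_range.1 hi
    apply coeff_eq_zero_of_natDegree_lt
    by_cases ha : a i = 0
    · rw [ha]; simp; exact lt_of_lt_of_le (Nat.mul_pos (by omega) hd) hmm
    · have h1 : (a i).natDegree < φ.natDegree := natDegree_lt_natDegree ha (hdeg i hin)
      have h2 : (C ((n.factorial / i.factorial : ℕ) : ℤ) * a i * φ ^ i).natDegree ≤
          (a i).natDegree + i * φ.natDegree := by
        refine natDegree_mul_le.trans (Nat.add_le_add (natDegree_C_mul_le _ _) ?_)
        exact natDegree_pow_le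
      have h3 : (i + 1) * φ.natDegree ≤ n * φ.natDegree := Nat.mul_le_mul_right _ hin
      rw [add_mul] at h3
      omega
  have hFlc : F.leadingCoeff = an := by
    rw [hFdef, leadingCoeff_add_of_degree_lt hSd, leadingCoeff_mul, leadingCoeff_C,
      hm.pow n |>.leadingCoeff, mul_one]
  have hFd : F.natDegree = n * φ.natDegree := by
    apply natDegree_eq_of_degree_eq_some
    rw [hFdef, degree_add_eq_right_of_degree_lt hSd, hdφ]
  have hF0 : F ≠ 0 := by
    intro h; rw [h, leadingCoeff_zero] at hFlc; exact han0 hFlc.symm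
  have hsumF : F = ∑ i ∈ Finset.range (n + 1),
      C ((n.factorial / i.factorial : ℕ) : ℤ) * (Function.update a n (C an)) i * φ ^ i := by
    rw [Finset.sum_range_succ, Function.update_self, Nat.div_self n.factorial_pos, hFdef, hS]
    simp only [Nat.cast_one, C_1, one_mul]
    congr 1
    refine Finset.sum_congr rfl fun i hi => ?_
    rw [Function.update_of_ne (Finset.mem_range.1 hi).ne]
  have hprod : ∀ G H : ℤ[X], G * H = F → 0 < G.natDegree → 0 < H.natDegree → False := by
    intro G H hGH hG hH
    refine core_one hn hm hirr (Function.update a n (C an)) an (Function.update_self ..) ?_ han ?_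
      G H (hGH.trans hsumF) ?_ hG hH
    · intro i hi
      rw [Function.update_of_ne hi.ne]; exact hdeg i hi
    · rw [Function.update_of_ne (by omega)]; exact ha0
    · rw [← leadingCoeff_mul, hGH, hFlc]
  have hc0 : F.content ≠ 0 := by rwa [Ne, content_eq_zero_iff]
  have hprim := F.isPrimitive_primPart
  have hirrP : Irreducible F.primPart := by
    refine ⟨?_, ?_⟩
    · intro hu
      have := natDegree_eq_zero_of_isUnit hu
      rw [natDegree_primPart, hFd] at this
      have := Nat.mul_pos (show 0 < n by omega) hd
      omega
    · intro G H hGH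
      have hc : ∀ Q : ℤ[X], Q ∣ F.primPart → Q.natDegree = 0 → IsUnit Q := by
        intro Q hQ hQ0
        rw [eq_C_of_natDegree_eq_zero hQ0] at hQ ⊢
        exact isUnit_C.2 (hprim _ hQ)
      by_contra hcon
      push Not at hcon
      have hG : 0 < G.natDegree := by
        by_contra h
        exact hcon.1 (hc G (hGH ▸ dvd_mul_right _ _) (by omega))
      have hH : 0 < H.natDegree := by
        by_contra h
        exact hcon.2 (hc H (hGH ▸ dvd_mul_left _ _) (by omega))
      refine hprod (C F.content * G) H ?_ ?_ hH
      · rw [mul_assoc, ← hGH, ← eq_C_content_mul_primPart]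
      · rwa [natDegree_C_mul hc0]
  have hQ := (IsPrimitive.Int.irreducible_iff_irreducible_map_cast hprim).1 hirrP
  rw [eq_C_content_mul_primPart F, Polynomial.map_mul, map_C]
  rw [irreducible_isUnit_mul (isUnit_C.2 ?_)]
  · exact hQ
  · rw [eq_intCast]
    exact (Int.cast_ne_zero.2 hc0).isUnit

end SchurAux

/-- **An extension of Schur's irreducibility result.**
Let `n ≥ 2` and let `φ ∈ ℤ[x]` be monic and irreducible modulo every prime `p ≤ n`.
Let `a 0, …, a (n-1) ∈ ℤ[x]` have degree `< deg φ` and let `an ∈ ℤ`. If `an` and the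
content of `a 0` are coprime with `n!`, then
`∑_{i<n} (n!/i!)·(a i)·φ^i + an·φ^n` is irreducible over `ℚ`. -/
theorem schur_extension (n : ℕ) (hn : 2 ≤ n) (φ : ℤ[X]) (hφmonic : φ.Monic)
    (hφirr : ∀ p : ℕ, p.Prime → p ≤ n → Irreducible (φ.map (Int.castRingHom (ZMod p))))
    (a : ℕ → ℤ[X]) (an : ℤ)
    (hdeg : ∀ i < n, (a i).degree < φ.degree)
    (han : IsCoprime an (n.factorial : ℤ))
    (ha0 : IsCoprime ((a 0).content) (n.factorial : ℤ)) :
    Irreducible ((∑ i ∈ Finset.range n,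
        C ((n.factorial / i.factorial : ℕ) : ℤ) * a i * φ ^ i
      + C an * φ ^ n).map (Int.castRingHom ℚ)) := by
  exact SchurAux.main_aux n hn φ hφmonic hφirr a an hdeg han ha0
end

section
/- Let n ≥ 2 be an integer and let φ ∈ ℤ[x] be a monic polynomial whose reduction modulo p is irreducible in 𝔽_p[x] for every prime p dividing n. Let a_0(x), a_1(x), …, a_{n−1}(x) ∈ ℤ[x] be polynomials each of degree strictly less than deg φ, and assume that the content of the product Π_{i=0}^{n−1} a_i(x) is coprime to n (in particular each a_i(x) ≠ 0). Then the polynomial Σ_{i=0}^{n−1} (n!/i!)·a_i(x)·φ(x)^i + φ(x)^n is irreducible in ℚ[x] (equivalently, Σ_{i=0}^{n−1} a_i(x)·φ(x)^i/i! + φ(x)^n/n! is irreducible over ℚ). -/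
open Polynomial

def gg (p : ℕ) : ℕ → ℕ
  | 0 => 0
  | t + 1 => p * gg p t + 1

lemma gg_val (p : ℕ) [Fact p.Prime] (t : ℕ) : ∀ u : ℕ,
    padicValNat p (p ^ t * u).factorial = u * gg p t + padicValNat p u.factorial := by
  induction t with
  | zero => intro u; simp [gg]
  | succ t ih =>
    intro u
    rw [pow_succ, mul_assoc, ih, padicValNat_factorial_mul, gg]
    ring

def hh (p e l i : ℕ) : ℤ := l * i - e * padicValNat p i.factorial

def cc (p e l t : ℕ) : ℤ := l * p ^ t - e * gg p t

lemma cc_succ (p e l t : ℕ) : cc p e l (t + 1) = p * cc p e l t - e := by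
  simp only [cc, gg]; push_cast; ring

lemma hh_pow (p e l t : ℕ) [Fact p.Prime] : hh p e l (p ^ t) = cc p e l t := by
  have := gg_val p t 1
  simp only [mul_one, one_mul, Nat.factorial_one, padicValNat_one_right, add_zero] at this
  simp [hh, cc, this]

lemma hh_add (p e l a b : ℕ) [Fact p.Prime] :
    hh p e l (a + b) ≤ hh p e l a + hh p e l b := by
  have h : padicValNat p a.factorial + padicValNat p b.factorial
      ≤ padicValNat p (a + b).factorial := by
    rw [← padicValNat.mul (Nat.factorial_ne_zero _) (Nat.factorial_ne_zero _)]
    exact (padicValNat_dvd_iff_le (Nat.factorial_ne_zero _)).1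
      (pow_padicValNat_dvd.trans (Nat.factorial_mul_factorial_dvd_factorial_add a b))
  simp only [hh]
  have h' : (padicValNat p a.factorial : ℤ) + padicValNat p b.factorial
      ≤ padicValNat p (a + b).factorial := by exact_mod_cast h
  have := mul_le_mul_of_nonneg_left h' (Int.natCast_nonneg e)
  rw [Nat.cast_add]
  linarith

lemma hh_digit (p e l t u d : ℕ) [Fact p.Prime] (hd : d < p) :
    hh p e l (p ^ t * (p * u + d)) = hh p e l (p ^ (t + 1) * u) + d * cc p e l t := by
  rw [show p ^ (t + 1) * u = p ^ t * (p * u) by ring]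
  simp only [hh, cc, gg_val, padicValNat_factorial_mul_add _ hd]
  push_cast; ring

lemma min_dvd (p e l n i : ℕ) [Fact p.Prime] (hi : i ≤ n)
    (hmin : ∀ r ≤ n, hh p e l i ≤ hh p e l r) (T : ℕ) (hT : ∀ t < T, 0 < cc p e l t) :
    p ^ T ∣ i := by
  induction T with
  | zero => simp
  | succ t ih =>
    obtain ⟨w, rfl⟩ := ih (fun s hs => hT s (by omega))
    have hp : 0 < p := (Fact.out : p.Prime).pos
    have hdig := hh_digit p e l t (w / p) (w % p) (Nat.mod_lt _ hp)
    rw [Nat.div_add_mod] at hdig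
    have hle : p ^ (t + 1) * (w / p) ≤ p ^ t * w := by
      rw [pow_succ, mul_assoc]
      exact Nat.mul_le_mul_left _ (Nat.mul_div_le w p)
    have h1 := hmin _ (hle.trans hi)
    have h2 := hT t (by omega)
    have h3 : ((w % p : ℕ) : ℤ) = 0 := by
      have h0 : (0 : ℤ) ≤ ((w % p : ℕ) : ℤ) := by positivity
      by_contra hne
      have : 0 < ((w % p : ℕ) : ℤ) := lt_of_le_of_ne h0 (Ne.symm hne)
      have := mul_pos this h2
      linarith
    have h4 : w % p = 0 := by exact_mod_cast h3
    rw [pow_succ]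
    exact Nat.mul_dvd_mul_left _ (Nat.dvd_of_mod_eq_zero h4)

lemma min_big (p e l n i t : ℕ) [Fact p.Prime]
    (hmin : ∀ r ≤ n, hh p e l i ≤ hh p e l r) (hc : cc p e l t < 0) : n < i + p ^ t := by
  by_contra hcon
  have h1 := hmin (i + p ^ t) (by omega)
  have h2 := hh_add p e l i (p ^ t)
  rw [hh_pow] at h2
  linarith

lemma dvd_gap {q i j : ℕ} (hi : q ∣ i) (hj : q ∣ j) (hij : i < j) : i + q ≤ j := by
  obtain ⟨a, rfl⟩ := hi
  obtain ⟨b, rfl⟩ := hj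
  have : a < b := lt_of_mul_lt_mul_left hij (Nat.zero_le _)
  calc q * a + q = q * (a + 1) := by ring
    _ ≤ q * b := Nat.mul_le_mul_left _ this

lemma arith (p n k e l : ℕ) [Fact p.Prime] (he : 0 < e) (hk : p ^ k ∣ n) (i j : ℕ)
    (hj : j ≤ n) (hij : i < j)
    (hmini : ∀ r ≤ n, hh p e l i ≤ hh p e l r) (hminj : ∀ r ≤ n, hh p e l j ≤ hh p e l r) :
    p ^ k ∣ e := by
  have hp : p.Prime := Fact.out
  have hex : ∃ t, cc p e l t ≤ 0 := by
    by_contra! hcon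
    have := min_dvd p e l n j hj hminj j (fun t _ => hcon t)
    have := Nat.le_of_dvd (by omega) this
    have := Nat.lt_pow_self hp.one_lt (n := j)
    omega
  classical
  obtain ⟨T, hT, hTm⟩ : ∃ T, cc p e l T ≤ 0 ∧ ∀ t < T, 0 < cc p e l t :=
    ⟨Nat.find hex, Nat.find_spec hex, fun t ht => not_le.1 (Nat.find_min hex ht)⟩
  have hi : i ≤ n := by omega
  have hdi := min_dvd p e l n i hi hmini T hTm
  have hdj := min_dvd p e l n j hj hminj T hTm
  have hgap := dvd_gap hdi hdj hij
  rcases lt_or_eq_of_le hT with hlt | heq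
  · have := min_big p e l n i T hmini hlt
    omega
  · rcases le_or_gt k T with hkT | hkT
    · refine (pow_dvd_pow p hkT).trans ?_
      have h1 : (l : ℤ) * p ^ T = e * gg p T := by simp only [cc] at heq; linarith
      have h2 : l * p ^ T = e * gg p T := by exact_mod_cast h1
      rcases T with _ | T
      · simp
      · have hco : Nat.Coprime (p ^ (T + 1)) (gg p (T + 1)) := by
          apply Nat.Coprime.pow_left
          simp [gg]
        exact hco.dvd_of_dvd_mul_right (h2 ▸ Dvd.intro_left _ rfl)
    · exfalso
      have hc1 : cc p e l (T + 1) < 0 := by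
        rw [cc_succ, heq]; simpa using he
      obtain ⟨w, rfl⟩ := hdi
      have hdig := hh_digit p e l T (w / p) (w % p) (Nat.mod_lt _ hp.pos)
      rw [Nat.div_add_mod, heq, mul_zero, add_zero] at hdig
      have hle : p ^ (T + 1) * (w / p) ≤ p ^ T * w := by
        rw [pow_succ, mul_assoc]
        exact Nat.mul_le_mul_left _ (Nat.mul_div_le w p)
      have h1 := min_big p e l n (p ^ (T + 1) * (w / p)) (T + 1)
        (by rw [← hdig]; exact hmini) hc1
      have h2 := dvd_gap (q := p ^ (T + 1)) (i := p ^ (T + 1) * (w / p)) (j := n)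
        (Dvd.intro _ rfl) ((pow_dvd_pow p hkT).trans hk) (by omega)
      omega

lemma res_lemma {S : Type*} [CommRing S] (p : ℕ) [Fact p.Prime]
    (P : Ideal S) [P.IsMaximal] [P.LiesOver (Ideal.span {(p : ℤ)})]
    [Module.Finite ℤ S]
    (θ : S) (φ : ℤ[X]) (hφ : φ.Monic)
    (hirr : Irreducible (φ.map (Int.castRingHom (ZMod p)))) (hθ : aeval θ φ ∈ P) :
    (∀ b : ℤ[X], b.degree < φ.degree → b.map (Int.castRingHom (ZMod p)) ≠ 0 → aeval θ b ∉ P) ∧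
    φ.natDegree ∣ Ideal.inertiaDeg' (Ideal.span {(p : ℤ)}) P := by
  let _ : Field (S ⧸ P) := Ideal.Quotient.field P
  have hpP : (p : S) ∈ P := by
    have h : (p : ℤ) ∈ Ideal.span {(p : ℤ)} := Ideal.mem_span_singleton_self _
    rw [P.over_def (Ideal.span {(p : ℤ)}), Ideal.mem_comap] at h
    simpa using h
  have hp0 : (p : S ⧸ P) = 0 := by
    have := Ideal.Quotient.eq_zero_iff_mem.2 hpP
    simpa using this
  have _ : CharP (S ⧸ P) p := (CharP.charP_iff_prime_eq_zero Fact.out).2 hp0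
  let _ : Algebra (ZMod p) (S ⧸ P) := ZMod.algebra _ p
  set θ' : S ⧸ P := Ideal.Quotient.mk P θ with hθ'
  have hev : ∀ b : ℤ[X], aeval θ' (b.map (Int.castRingHom (ZMod p))) =
      Ideal.Quotient.mk P (aeval θ b) := by
    intro b
    rw [aeval_def, eval₂_map, aeval_def, hom_eval₂]
    congr 1
    exact RingHom.ext_int _ _
  have hmin : φ.map (Int.castRingHom (ZMod p)) = minpoly (ZMod p) θ' := by
    apply minpoly.eq_of_irreducible_of_monic hirr _ (hφ.map _)
    rw [hev]; exact Ideal.Quotient.eq_zero_iff_mem.2 hθ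
  constructor
  · intro b hb hb0 hmem
    have h0 : aeval θ' (b.map (Int.castRingHom (ZMod p))) = 0 := by
      rw [hev]; exact Ideal.Quotient.eq_zero_iff_mem.2 hmem
    have h1 := minpoly.degree_le_of_ne_zero (ZMod p) θ' hb0 h0
    rw [← hmin, hφ.degree_map] at h1
    exact absurd (h1.trans degree_map_le) (not_le.2 hb)
  · rw [Ideal.inertiaDeg'_algebraMap]
    have hfr : Module.finrank (ℤ ⧸ Ideal.span {(p : ℤ)}) (S ⧸ P) =
        Module.finrank (ZMod p) (S ⧸ P) := by
      refine Algebra.finrank_eq_of_equiv_equiv (Int.quotientSpanNatEquivZMod p) (RingEquiv.refl _) ?_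
      apply Ideal.Quotient.ringHom_ext
      exact RingHom.ext_int _ _
    rw [hfr, ← hφ.natDegree_map (Int.castRingHom (ZMod p)), hmin]
    apply minpoly.degree_dvd
    by_contra h
    rw [minpoly.eq_zero h] at hmin
    exact hirr.ne_zero hmin

open WithZero in
lemma ram_lemma {S : Type*} [CommRing S] [IsDedekindDomain S] [CharZero S] (p : ℕ) [Fact p.Prime]
    (v : IsDedekindDomain.HeightOneSpectrum S) [v.asIdeal.LiesOver (Ideal.span {(p : ℤ)})]
    (n k : ℕ) (hk : p ^ k ∣ n) (A : ℕ → S) (x : S) (hA : ∀ i ≤ n, A i ∉ v.asIdeal) (hx : x ≠ 0)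
    (hsum : ∑ i ∈ Finset.range (n + 1),
      ((n.factorial / i.factorial : ℕ) : S) * A i * x ^ i = 0) :
    p ^ k ∣ Ideal.ramificationIdx' (Ideal.span {(p : ℤ)}) v.asIdeal := by
  have hp : p.Prime := Fact.out
  have hmemZ : ∀ z : ℤ, (z : S) ∈ v.asIdeal ↔ (p : ℤ) ∣ z := by
    intro z
    rw [← Ideal.mem_span_singleton, v.asIdeal.over_def (Ideal.span {(p : ℤ)}), Ideal.mem_comap]
    simp
  have hexp : ∀ y : S, y ≠ 0 → ∃ m : ℕ, v.intValuation y = exp (-(m : ℤ)) :=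
    fun y hy => ⟨_, v.intValuation_if_neg hy⟩
  obtain ⟨e, he⟩ := hexp (p : S) (by exact_mod_cast hp.ne_zero)
  obtain ⟨l, hl⟩ := hexp x hx
  have hmap : ∀ m, Ideal.map (algebraMap ℤ S) (Ideal.span {(p : ℤ)}) ≤ v.asIdeal ^ m ↔ m ≤ e := by
    intro m
    rw [Ideal.map_span, Set.image_singleton, Ideal.span_singleton_le_iff_mem,
      ← v.intValuation_le_pow_iff_mem]
    simp only [eq_intCast, Int.cast_natCast]
    rw [he, exp_le_exp]
    omega
  have hram : Ideal.ramificationIdx' (Ideal.span {(p : ℤ)}) v.asIdeal = e :=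
    Ideal.ramificationIdx'_spec ((hmap e).2 le_rfl) (fun h => by have := (hmap _).1 h; omega)
  have he0 : 0 < e := by
    have h1 : v.intValuation (p : S) < 1 := by
      rw [v.intValuation_lt_one_iff_mem]
      have := (hmemZ p).2 dvd_rfl
      simpa using this
    rw [he, ← exp_zero, exp_lt_exp] at h1
    omega
  have hnat : ∀ N : ℕ, N ≠ 0 → v.intValuation (N : S) = exp (-(e * padicValNat p N : ℤ)) := by
    intro N hN
    obtain ⟨a, u, hu, rfl⟩ := Nat.exists_eq_pow_mul_and_not_dvd hN p hp.ne_one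
    have hu0 : u ≠ 0 := by rintro rfl; simp at hu
    have h1 : v.intValuation (u : S) = 1 := by
      rw [IsDedekindDomain.HeightOneSpectrum.intValuation_eq_one_iff]
      intro h
      have := (hmemZ u).1 (by simpa using h)
      exact hu (by exact_mod_cast this)
    have h2 : padicValNat p (p ^ a * u) = a := by
      rw [padicValNat.mul (pow_ne_zero _ hp.ne_zero) hu0, padicValNat.prime_pow,
        padicValNat.eq_zero_of_not_dvd hu, add_zero]
    rw [h2]
    push_cast
    rw [map_mul, map_pow, he, h1, mul_one, ← exp_nsmul]
    congr 1
    simp; ring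
  have hterm : ∀ i ≤ n, v.intValuation (((n.factorial / i.factorial : ℕ) : S) * A i * x ^ i) =
      exp (-(hh p e l i + e * (padicValNat p n.factorial : ℕ))) := by
    intro i hi
    have hd := Nat.factorial_dvd_factorial hi
    have hne : n.factorial / i.factorial ≠ 0 :=
      (Nat.div_pos (Nat.le_of_dvd (Nat.factorial_pos _) hd) (Nat.factorial_pos _)).ne'
    have hv : padicValNat p n.factorial = padicValNat p (n.factorial / i.factorial) +
        padicValNat p i.factorial := by
      rw [← padicValNat.mul hne (Nat.factorial_ne_zero _), Nat.div_mul_cancel hd]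
    rw [map_mul, map_mul, map_pow, hnat _ hne, hl,
      IsDedekindDomain.HeightOneSpectrum.intValuation_eq_one_iff.2 (hA i hi), mul_one,
      ← exp_nsmul, ← exp_add, hv]
    congr 1
    rw [hh, Nat.cast_add]
    simp only [nsmul_eq_mul]
    ring
  obtain ⟨i, hi, hmin⟩ := Finset.exists_min_image (Finset.range (n + 1)) (hh p e l) ⟨0, by simp⟩
  have hi' : i ≤ n := by simpa [Nat.lt_succ_iff] using hi
  have hmin' : ∀ r ≤ n, hh p e l i ≤ hh p e l r := fun r hr => hmin r (by simp; omega)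
  obtain ⟨j, hj, hji, hle⟩ : ∃ j ≤ n, j ≠ i ∧ hh p e l j ≤ hh p e l i := by
    by_contra! hcon
    have := Valuation.map_sum_eq_of_lt v.intValuation hi
      (f := fun i => ((n.factorial / i.factorial : ℕ) : S) * A i * x ^ i)
      (by
        intro j hj
        simp only [Finset.mem_sdiff, Finset.mem_range, Finset.mem_singleton] at hj
        rw [hterm i hi', hterm j (by omega), exp_lt_exp]
        have := hcon j (by omega) hj.2
        linarith)
    rw [hsum, hterm i hi', map_zero] at this
    exact exp_ne_zero this.symm
  rw [hram]
  have hminj : ∀ r ≤ n, hh p e l j ≤ hh p e l r := fun r hr => hle.trans (hmin' r hr)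
  rcases lt_or_gt_of_ne hji with h | h
  · exact arith p n k e l he0 hk j i hi' h hminj hmin'
  · exact arith p n k e l he0 hk i j hj h hmin' hminj

lemma F_monic (n : ℕ) (φ : ℤ[X]) (hφ : φ.Monic) (a c : ℕ → ℤ[X])
    (hc : ∀ i, (c i).degree ≤ 0)
    (hdeg : ∀ i < n, (a i).degree < φ.degree) :
    (∑ i ∈ Finset.range n, c i * a i * φ ^ i).degree < (φ ^ n).degree := by
  have hφ0 : φ.degree = (φ.natDegree : WithBot ℕ) := degree_eq_natDegree hφ.ne_zero
  rw [degree_eq_natDegree (hφ.pow n).ne_zero, hφ.natDegree_pow]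
  refine lt_of_le_of_lt (degree_sum_le _ _) ?_
  rw [Finset.sup_lt_iff (WithBot.bot_lt_coe _)]
  intro i hi
  have hi : i < n := by simpa using hi
  by_cases h0 : a i = 0
  · simp only [h0, mul_zero, zero_mul, degree_zero]; exact WithBot.bot_lt_coe _
  have h1 := hdeg i hi
  have h3 : (c i * a i).degree ≤ (a i).degree := by
    calc _ ≤ (c i).degree + (a i).degree := degree_mul_le _ _
      _ ≤ 0 + (a i).degree := by gcongr; exact hc i
      _ = _ := zero_add _
  have h2 : (c i * a i * φ ^ i).degree ≤ (a i).degree + (φ ^ i).degree :=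
    (degree_mul_le _ _).trans (by gcongr)
  refine lt_of_le_of_lt h2 ?_
  rw [degree_eq_natDegree h0, hφ0] at h1
  rw [degree_eq_natDegree h0, degree_eq_natDegree (hφ.pow i).ne_zero, hφ.natDegree_pow]
  have h1 : (a i).natDegree < φ.natDegree := by exact_mod_cast h1
  have : (a i).natDegree + i * φ.natDegree < n * φ.natDegree := by
    calc _ < φ.natDegree + i * φ.natDegree := by omega
      _ = (i + 1) * φ.natDegree := by ring
      _ ≤ _ := Nat.mul_le_mul_right _ hi
  exact_mod_cast this

lemma prime_step (n : ℕ) (φ : ℤ[X]) (hφ : φ.Monic) (a : ℕ → ℤ[X])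
    (hdeg : ∀ i < n, (a i).degree < φ.degree) (p k : ℕ) [Fact p.Prime] (hpn : p ∣ n)
    (hk : p ^ k ∣ n)
    (hirr : Irreducible (φ.map (Int.castRingHom (ZMod p))))
    (ha : ∀ i < n, (a i).map (Int.castRingHom (ZMod p)) ≠ 0)
    (hn : 0 < n)
    (K : Type*) [Field K] [NumberField K] (θ : NumberField.RingOfIntegers K)
    (hθ : aeval θ (∑ i ∈ Finset.range n,
        C ((n.factorial / i.factorial : ℕ) : ℤ) * a i * φ ^ i + φ ^ n) = 0) :
    p ^ k * φ.natDegree ∣ Module.finrank ℚ K := by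
  have hp : p.Prime := Fact.out
  have hpZ : Prime (p : ℤ) := Nat.prime_iff_prime_int.1 hp
  have hbot : Ideal.span {(p : ℤ)} ≠ ⊥ := by simp [hp.ne_zero]
  have hmax : (Ideal.span {(p : ℤ)}).IsMaximal :=
    ((Ideal.span_singleton_prime hpZ.ne_zero).2 hpZ).isMaximal hbot
  rw [← Ideal.sum_ramification_inertia (NumberField.RingOfIntegers K) ℚ K hbot]
  apply Finset.dvd_sum
  intro P hP
  rw [IsDedekindDomain.mem_primesOverFinset_iff hbot] at hP
  obtain ⟨hPp, hPo⟩ := hP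
  have hP0 : P ≠ ⊥ := Ideal.ne_bot_of_liesOver_of_ne_bot hbot P
  have hPm : P.IsMaximal := hPp.isMaximal hP0
  have hpP : ∀ N : ℕ, p ∣ N → (N : NumberField.RingOfIntegers K) ∈ P := by
    intro N hN
    have h : (N : ℤ) ∈ Ideal.span {(p : ℤ)} :=
      Ideal.mem_span_singleton.2 (by exact_mod_cast hN)
    rw [P.over_def (Ideal.span {(p : ℤ)}), Ideal.mem_comap] at h
    simpa using h
  have hsum : ∑ i ∈ Finset.range n, ((n.factorial / i.factorial : ℕ) :
      NumberField.RingOfIntegers K) * aeval θ (a i) * (aeval θ φ) ^ i + (aeval θ φ) ^ n = 0 := by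
    rw [← hθ]
    simp only [map_add, map_sum, map_mul, map_pow, eq_intCast, Int.cast_natCast, map_natCast]
  have hdvd : ∀ i < n, p ∣ n.factorial / i.factorial := by
    intro i hi
    refine hpn.trans ?_
    obtain ⟨n, rfl⟩ : ∃ r, n = r + 1 := ⟨n - 1, by omega⟩
    rw [Nat.factorial_succ, Nat.mul_div_assoc _ (Nat.factorial_dvd_factorial (by omega))]
    exact Dvd.intro _ rfl
  have hφP : aeval θ φ ∈ P := by
    apply hPp.mem_of_pow_mem n
    have h1 : ∑ i ∈ Finset.range n, ((n.factorial / i.factorial : ℕ) :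
      NumberField.RingOfIntegers K) * aeval θ (a i) * (aeval θ φ) ^ i ∈ P := by
      apply Ideal.sum_mem
      intro i hi
      rw [mul_assoc]
      exact Ideal.mul_mem_right _ _ (hpP _ (hdvd i (by simpa using hi)))
    rw [add_comm] at hsum
    rw [eq_neg_of_add_eq_zero_left hsum]
    exact neg_mem h1
  obtain ⟨hr1, hr2⟩ := res_lemma p P θ φ hφ hirr hφP
  refine Nat.mul_dvd_mul ?_ hr2
  have hA : ∀ i < n, aeval θ (a i) ∉ P := fun i hi => hr1 _ (hdeg i hi) (ha i hi)
  let v : IsDedekindDomain.HeightOneSpectrum (NumberField.RingOfIntegers K) := ⟨P, hPp, hP0⟩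
  have _ : v.asIdeal.LiesOver (Ideal.span {(p : ℤ)}) := hPo
  have hx : aeval θ φ ≠ 0 := by
    intro h0
    rw [h0, zero_pow hn.ne', add_zero] at hsum
    rw [Finset.sum_eq_single 0 (by intro i _ hi; simp [hi]) (by simp; omega)] at hsum
    simp only [Nat.factorial_zero, Nat.div_one, pow_zero, mul_one] at hsum
    rcases mul_eq_zero.1 hsum with h | h
    · exact Nat.factorial_ne_zero n (by exact_mod_cast h)
    · exact hA 0 hn (h ▸ P.zero_mem)
  refine ram_lemma p v n k hk (fun i => if i < n then aeval θ (a i) else 1) (aeval θ φ) ?_ hx ?_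
  · intro i hi
    by_cases h : i < n
    · simpa [h] using hA i h
    · simp only [h, if_false]
      exact fun h1 => hPm.ne_top ((Ideal.eq_top_iff_one _).2 h1)
  · rw [Finset.sum_range_succ, ← hsum]
    congr 1
    · apply Finset.sum_congr rfl
      intro i hi
      simp [Finset.mem_range.1 hi]
    · simp [Nat.div_self (Nat.factorial_pos n)]

theorem schur_extension_coleman (n : ℕ) (hn : 2 ≤ n) (φ : ℤ[X]) (hφmonic : φ.Monic)
    (hφirr : ∀ p : ℕ, p.Prime → p ∣ n → Irreducible (φ.map (Int.castRingHom (ZMod p))))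
    (a : ℕ → ℤ[X])
    (hdeg : ∀ i < n, (a i).degree < φ.degree)
    (hcont : IsCoprime ((∏ i ∈ Finset.range n, a i).content) (n : ℤ)) :
    Irreducible ((∑ i ∈ Finset.range n,
        C ((n.factorial / i.factorial : ℕ) : ℤ) * a i * φ ^ i
      + φ ^ n).map (Int.castRingHom ℚ)) := by
  have hm : 0 < φ.natDegree := by
    have hp := Nat.minFac_prime (show n ≠ 1 by omega)
    have _ : Fact (n.minFac).Prime := ⟨hp⟩
    have h := (hφirr _ hp (Nat.minFac_dvd n)).natDegree_pos
    rwa [hφmonic.natDegree_map] at h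
  have ha : ∀ p : ℕ, p.Prime → p ∣ n → ∀ i < n, (a i).map (Int.castRingHom (ZMod p)) ≠ 0 := by
    intro p hp hpn i hi h0
    have h1 : C (p : ℤ) ∣ a i := by
      rw [C_dvd_iff_dvd_coeff]
      intro j
      have := congrArg (fun q => q.coeff j) h0
      simp only [coeff_map, coeff_zero, eq_intCast] at this
      exact (ZMod.intCast_zmod_eq_zero_iff_dvd _ _).1 this
    have h2 : (p : ℤ) ∣ (∏ i ∈ Finset.range n, a i).content :=
      dvd_content_iff_C_dvd.2 (h1.trans (Finset.dvd_prod_of_mem _ (by simpa using hi)))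
    have h3 := hcont.isUnit_of_dvd' h2 (by exact_mod_cast hpn)
    exact (Nat.prime_iff_prime_int.1 hp).not_isUnit h3
  have hlt := F_monic n φ hφmonic a (fun i => C ((n.factorial / i.factorial : ℕ) : ℤ))
    (fun i => degree_C_le) hdeg
  set F := ∑ i ∈ Finset.range n, C ((n.factorial / i.factorial : ℕ) : ℤ) * a i * φ ^ i + φ ^ n
    with hF
  have hFm : F.Monic := by
    rw [hF, add_comm]; exact (hφmonic.pow n).add_of_left hlt
  have hFd : F.natDegree = n * φ.natDegree := by
    rw [hF, natDegree_add_eq_right_of_degree_lt hlt, hφmonic.natDegree_pow]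
  have hnm : 0 < n * φ.natDegree := Nat.mul_pos (by omega) hm
  set G := F.map (Int.castRingHom ℚ) with hG
  have hGd : G.natDegree = n * φ.natDegree := by rw [hG, hFm.natDegree_map, hFd]
  have hG0 : G ≠ 0 := (hFm.map _).ne_zero
  have hGu : ¬ IsUnit G := by
    intro h
    have := natDegree_eq_zero_of_isUnit h
    omega
  obtain ⟨g, hgirr, hgG⟩ := WfDvdMonoid.exists_irreducible_factor hGu hG0
  have _ : Fact (Irreducible g) := ⟨hgirr⟩
  have hfr : Module.finrank ℚ (AdjoinRoot g) = g.natDegree := by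
    rw [(AdjoinRoot.powerBasis hgirr.ne_zero).finrank, AdjoinRoot.powerBasis_dim]
  have _ : FiniteDimensional ℚ (AdjoinRoot g) := (AdjoinRoot.powerBasis hgirr.ne_zero).finite
  have _ : NumberField (AdjoinRoot g) := ⟨⟩
  have hroot : aeval (AdjoinRoot.root g) F = 0 := by
    have h1 : aeval (AdjoinRoot.root g) G = 0 := by
      obtain ⟨q, hq⟩ := hgG
      have h2 : aeval (AdjoinRoot.root g) g = 0 := by
        rw [aeval_def, ← AdjoinRoot.eval₂_root g]
        congr 1
      rw [hq, map_mul, h2, zero_mul]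
    rw [hG, aeval_def, eval₂_map] at h1
    rw [aeval_def, ← h1]
    congr 1
  have hint : IsIntegral ℤ (AdjoinRoot.root g) := ⟨F, hFm, hroot⟩
  let θ : NumberField.RingOfIntegers (AdjoinRoot g) := ⟨AdjoinRoot.root g, hint⟩
  have hθ : aeval θ F = 0 := by
    apply NumberField.RingOfIntegers.coe_injective
    rw [← aeval_algebraMap_apply, map_zero]
    exact hroot
  have hstep : ∀ p k : ℕ, p.Prime → p ∣ n → p ^ k ∣ n → p ^ k * φ.natDegree ∣ g.natDegree := by
    intro p k hp hpn hk
    have _ : Fact p.Prime := ⟨hp⟩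
    rw [← hfr]
    exact prime_step n φ hφmonic a hdeg p k hpn hk (hφirr p hp hpn) (ha p hp hpn) (by omega) _ θ hθ
  obtain ⟨D, hD⟩ : φ.natDegree ∣ g.natDegree := by
    have := hstep _ 0 (Nat.minFac_prime (show n ≠ 1 by omega)) (Nat.minFac_dvd n) (by simp)
    simpa using this
  have hnD : n ∣ D := by
    rw [Nat.dvd_iff_prime_pow_dvd_dvd]
    intro p k hp hk
    rcases k with _ | k
    · simp
    have := hstep p (k + 1) hp ((dvd_pow_self p (by omega)).trans hk) hk
    rw [hD, mul_comm] at this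
    exact Nat.dvd_of_mul_dvd_mul_left hm this
  have hge : G.natDegree ≤ g.natDegree := by
    rw [hGd, hD, mul_comm]
    apply Nat.mul_le_mul_left
    apply Nat.le_of_dvd _ hnD
    have := hgirr.natDegree_pos
    rw [hD] at this
    exact Nat.pos_of_mul_pos_left this
  exact (associated_of_dvd_of_natDegree_le hgG hG0 hge).irreducible hgirr
end

section
/- Let n, k, ℓ be integers with 0 ≤ ℓ < k ≤ n/2 and let p be a prime. Let φ ∈ ℤ[x] be a monic polynomial whose reduction modulo p is irreducible in 𝔽_p[x]. Let f ∈ ℤ[x] be a monic polynomial not divisible by φ(x) in ℤ[x], with φ-expansion f = Σ_{i=0}^{n} f_i(x)·φ(x)^i and f_n(x) ≠ 0. Assume: (1) v_p^x(f_i) > 0 (i.e., p divides every coefficient of f_i) for all 0 ≤ i ≤ n−ℓ−1; (2) f_0 ≠ 0 and for every index j with 1 ≤ j ≤ n and f_j ≠ 0 one has k·(v_p^x(f_0) − v_p^x(f_j)) < j (i.e., the right-most edge of the φ-Newton polygon of f with respect to p has slope less than 1/k). Let a_0(x), …, a_n(x) ∈ ℤ[x] satisfy: (i) deg a_i < deg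 φ − deg f_i for 0 ≤ i ≤ n; (ii) v_p^x(a_0) = 0, i.e., p does not divide the content of a_0; (iii) p does not divide the leading coefficient of a_n. Then the polynomial Σ_{i=0}^{n} a_i(x)·f_i(x)·φ(x)^i has no factor in ℤ[x] whose degree lies in the interval [(ℓ+1)·deg φ, (k+1)·deg φ). -/
open Polynomial

/-- The Gaussian valuation `v_p^x` of a polynomial over `ℤ`: the minimum of the
`p`-adic valuations of its coefficients, realized as the largest `m` such that
`p^m` divides every coefficient. -/
noncomputable def vpx (p : ℕ) (g : ℤ[X]) : ℕ :=
  sSup {m : ℕ | ∀ j, (p : ℤ) ^ m ∣ g.coeff j}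

/-- The `i`-th coefficient of the `φ`-expansion. -/
noncomputable def phiC (φ : ℤ[X]) : ℕ → ℤ[X] → ℤ[X]
  | 0, g => g %ₘ φ
  | i + 1, g => phiC φ i (g /ₘ φ)

lemma add_divBy (φ : ℤ[X]) (hφ : φ.Monic) (g h : ℤ[X]) :
    (g + h) /ₘ φ = g /ₘ φ + h /ₘ φ := by
  refine (div_modByMonic_unique (g /ₘ φ + h /ₘ φ) (g %ₘ φ + h %ₘ φ) hφ ⟨?_, ?_⟩).1
  · have h1 := modByMonic_add_div g φ
    have h2 := modByMonic_add_div h φ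
    linear_combination h1 + h2
  · exact (degree_add_le _ _).trans_lt
      (max_lt (degree_modByMonic_lt _ hφ) (degree_modByMonic_lt _ hφ))

lemma C_mul_divBy (φ : ℤ[X]) (hφ : φ.Monic) (c : ℤ) (g : ℤ[X]) :
    (C c * g) /ₘ φ = C c * (g /ₘ φ) ∧ (C c * g) %ₘ φ = C c * (g %ₘ φ) := by
  refine (div_modByMonic_unique (C c * (g /ₘ φ)) (C c * (g %ₘ φ)) hφ ⟨?_, ?_⟩)
  · have h1 := modByMonic_add_div g φ
    linear_combination C c * h1
  · refine lt_of_le_of_lt ?_ (degree_modByMonic_lt g hφ)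
    rw [← smul_eq_C_mul]
    exact degree_smul_le _ _

lemma mul_phi_divBy (φ : ℤ[X]) (hφ : φ.Monic) (g : ℤ[X]) : (g * φ) /ₘ φ = g := by
  rw [mul_comm]; exact mul_divByMonic_cancel_left _ hφ

lemma phiC_add (φ : ℤ[X]) (hφ : φ.Monic) (i : ℕ) : ∀ g h : ℤ[X],
    phiC φ i (g + h) = phiC φ i g + phiC φ i h := by
  induction i with
  | zero => intro g h; exact add_modByMonic g h
  | succ i ih => intro g h; simp only [phiC, add_divBy φ hφ, ih]

lemma phiC_zero (φ : ℤ[X]) (i : ℕ) : phiC φ i 0 = 0 := by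
  induction i with
  | zero => simp [phiC]
  | succ i ih => simp [phiC, ih]

lemma phiC_sum (φ : ℤ[X]) (hφ : φ.Monic) (i : ℕ) {ι : Type} (s : Finset ι) (F : ι → ℤ[X]) :
    phiC φ i (∑ x ∈ s, F x) = ∑ x ∈ s, phiC φ i (F x) := by
  classical
  induction s using Finset.induction_on with
  | empty => simp [phiC_zero]
  | insert x s hx ih => rw [Finset.sum_insert hx, Finset.sum_insert hx, phiC_add φ hφ, ih]

lemma phiC_C_mul (φ : ℤ[X]) (hφ : φ.Monic) (c : ℤ) (i : ℕ) : ∀ g : ℤ[X],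
    phiC φ i (C c * g) = C c * phiC φ i g := by
  induction i with
  | zero => intro g; exact (C_mul_divBy φ hφ c g).2
  | succ i ih => intro g; simp only [phiC, (C_mul_divBy φ hφ c g).1, ih]

lemma phiC_dvd (φ : ℤ[X]) (hφ : φ.Monic) (c : ℤ) (i m : ℕ) (g : ℤ[X]) (h : C c ^ m ∣ g) :
    C c ^ m ∣ phiC φ i g := by
  obtain ⟨q, rfl⟩ := h
  rw [← C_pow, phiC_C_mul φ hφ]
  exact dvd_mul_right _ _

lemma phiC_mul_pow_add (φ : ℤ[X]) (hφ : φ.Monic) (i m : ℕ) (g : ℤ[X]) :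
    phiC φ (m + i) (g * φ ^ i) = phiC φ m g := by
  induction i with
  | zero => simp
  | succ i ih =>
    rw [← add_assoc, pow_succ, ← mul_assoc]
    simp only [phiC, mul_phi_divBy φ hφ, ih]

lemma phiC_mul_pow_lt (φ : ℤ[X]) (hφ : φ.Monic) (m : ℕ) : ∀ (i : ℕ) (g : ℤ[X]), m < i →
    phiC φ m (g * φ ^ i) = 0 := by
  induction m with
  | zero =>
    intro i g h
    obtain ⟨j, rfl⟩ : ∃ j, i = j + 1 := ⟨i - 1, by omega⟩
    rw [pow_succ, ← mul_assoc]
    exact mul_self_modByMonic hφ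
  | succ m ih =>
    intro i g h
    obtain ⟨j, rfl⟩ : ∃ j, i = j + 1 := ⟨i - 1, by omega⟩
    rw [pow_succ, ← mul_assoc]
    simp only [phiC, mul_phi_divBy φ hφ]
    exact ih j g (by omega)

lemma phiC_small (φ : ℤ[X]) (hφ : φ.Monic) (g : ℤ[X]) (h : g.degree < φ.degree) :
    phiC φ 0 g = g ∧ ∀ i, 0 < i → phiC φ i g = 0 := by
  refine ⟨(modByMonic_eq_self_iff hφ).2 h, ?_⟩
  intro i hi
  obtain ⟨j, rfl⟩ : ∃ j, i = j + 1 := ⟨i - 1, by omega⟩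
  simp only [phiC, (divByMonic_eq_zero_iff hφ).2 h, phiC_zero]

lemma phiC_expansion (φ : ℤ[X]) (hφ : φ.Monic) (N : ℕ) (b : ℕ → ℤ[X])
    (hb : ∀ i < N, (b i).degree < φ.degree) (m : ℕ) :
    phiC φ m (∑ i ∈ Finset.range N, b i * φ ^ i) = if m < N then b m else 0 := by
  rw [phiC_sum φ hφ]
  have key : ∀ i ∈ Finset.range N, phiC φ m (b i * φ ^ i) = if i = m then b m else 0 := by
    intro i hi
    have hi' := hb i (Finset.mem_range.1 hi)
    rcases lt_trichotomy m i with h | h | h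
    · rw [phiC_mul_pow_lt φ hφ m i _ h, if_neg (by omega)]
    · subst h
      have := phiC_mul_pow_add φ hφ m 0 (b m)
      rw [zero_add] at this
      rw [this, if_pos rfl, (phiC_small φ hφ _ hi').1]
    · obtain ⟨j, rfl⟩ : ∃ j, m = j + i := ⟨m - i, by omega⟩
      rw [phiC_mul_pow_add φ hφ, if_neg (by omega), (phiC_small φ hφ _ hi').2 j (by omega)]
  rw [Finset.sum_congr rfl key, Finset.sum_ite_eq']
  simp

lemma phiC_degree (φ : ℤ[X]) (hφ : φ.Monic) (i : ℕ) : ∀ g, (phiC φ i g).degree < φ.degree := by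
  induction i with
  | zero => intro g; exact degree_modByMonic_lt _ hφ
  | succ i ih => intro g; exact ih _

lemma phiC_reconstruct (φ : ℤ[X]) (hφ : φ.Monic) (hd : 0 < φ.natDegree) (N : ℕ) :
    ∀ g : ℤ[X], g.natDegree < (N + 1) * φ.natDegree →
    g = ∑ i ∈ Finset.range (N + 1), phiC φ i g * φ ^ i := by
  induction N with
  | zero =>
    intro g h
    have : g.degree < φ.degree := degree_lt_degree (by simpa using h)
    simp [(phiC_small φ hφ g this).1]
  | succ N ih =>
    intro g h
    rw [Finset.sum_range_succ']
    have h1 : (g /ₘ φ).natDegree < (N + 1) * φ.natDegree := by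
      rw [natDegree_divByMonic _ hφ]
      have : (N + 1 + 1) * φ.natDegree = (N + 1) * φ.natDegree + φ.natDegree := by ring
      have : 0 < (N + 1) * φ.natDegree := by positivity
      omega
    have h2 := ih _ h1
    have h3 := modByMonic_add_div g φ
    have h4 : ∑ i ∈ Finset.range (N + 1), phiC φ (i + 1) g * φ ^ (i + 1)
        = φ * (g /ₘ φ) := by
      conv_rhs => rw [h2]
      rw [Finset.mul_sum]
      refine Finset.sum_congr rfl fun i _ => ?_
      simp only [phiC]; ring
    rw [h4]
    simp only [phiC, pow_zero, mul_one]
    rw [add_comm]; exact h3.symm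

lemma primeC (p : ℕ) (hp : p.Prime) : Prime (C (p : ℤ)) :=
  Polynomial.prime_C_iff.2 (Nat.prime_iff_prime_int.1 hp)

lemma vpx_iff (p : ℕ) (hp : p.Prime) (g : ℤ[X]) (hg : g ≠ 0) (m : ℕ) :
    C (p : ℤ) ^ m ∣ g ↔ m ≤ vpx p g := by
  have hf : FiniteMultiplicity (C (p : ℤ)) g := FiniteMultiplicity.of_prime_left (primeC p hp) hg
  have hs : {m : ℕ | ∀ j, (p : ℤ) ^ m ∣ g.coeff j} = Set.Iic (multiplicity (C (p : ℤ)) g) := by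
    ext m
    rw [Set.mem_ofPred_eq, Set.mem_Iic, ← hf.pow_dvd_iff_le_multiplicity, ← C_pow,
      C_dvd_iff_dvd_coeff]
  unfold vpx
  rw [hs, csSup_Iic, hf.pow_dvd_iff_le_multiplicity]

lemma map_zero_iff (p : ℕ) (g : ℤ[X]) :
    g.map (Int.castRingHom (ZMod p)) = 0 ↔ C (p : ℤ) ∣ g := by
  rw [C_dvd_iff_dvd_coeff, Polynomial.ext_iff]
  refine forall_congr' fun i => ?_
  rw [coeff_map, coeff_zero]
  exact ZMod.intCast_zmod_eq_zero_iff_dvd _ _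

/-- minimal weight with maximal index -/
lemma exists_extremal (k N : ℕ) (P : ℕ → Prop) (v : ℕ → ℕ) (hN : ∀ i, P i → i ≤ N)
    (hne : ∃ i, P i) :
    ∃ I, P I ∧ ∀ i, P i → k * v I + I ≤ k * v i + i ∧ (I < i → k * v I + I < k * v i + i) := by
  classical
  obtain ⟨i0, hi0⟩ := hne
  let s := (Finset.range (N + 1)).filter P
  have hs : s.Nonempty := ⟨i0, by simp [s, hi0, Nat.lt_succ_iff, hN i0 hi0]⟩
  obtain ⟨I, hI, hmin⟩ := s.exists_min_image (fun i => (k * v i + i) * (N + 1) + (N - i)) hs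
  have hI' : P I := (Finset.mem_filter.1 hI).2
  refine ⟨I, hI', fun i hi => ?_⟩
  have h := hmin i (by simp [s, hi, Nat.lt_succ_iff, hN i hi])
  have h1 := hN i hi
  have h2 := hN I hI'
  generalize k * v i + i = x at *
  generalize k * v I + I = y at *
  constructor
  · by_contra hc
    push Not at hc
    have : (x + 1) * (N + 1) ≤ y * (N + 1) := Nat.mul_le_mul_right _ hc
    rw [add_mul] at this
    omega
  · intro hlt
    by_contra hc
    push Not at hc
    have : x * (N + 1) ≤ y * (N + 1) := Nat.mul_le_mul_right _ hc
    omega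

/-- the product remainder has no extra divisibility -/
lemma rem_not_dvd (p : ℕ) (hp : p.Prime) (φ : ℤ[X]) (hφ : φ.Monic)
    (hφirr : Irreducible (φ.map (Int.castRingHom (ZMod p)))) (u w : ℤ[X])
    (hu0 : u ≠ 0) (hw0 : w ≠ 0)
    (hu : u.degree < φ.degree) (hw : w.degree < φ.degree) :
    ¬ C (p : ℤ) ^ (vpx p u + vpx p w + 1) ∣ phiC φ 0 (u * w) := by
  haveI : Fact p.Prime := ⟨hp⟩
  have small : ∀ u : ℤ[X], u ≠ 0 → u.degree < φ.degree → ∃ u' : ℤ[X],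
      u = C (p : ℤ) ^ (vpx p u) * u' ∧ ¬ φ.map (Int.castRingHom (ZMod p)) ∣
        u'.map (Int.castRingHom (ZMod p)) := by
    intro u hu0 hu
    obtain ⟨u', hu'⟩ := (vpx_iff p hp u hu0 _).2 le_rfl
    refine ⟨u', hu', fun hd => ?_⟩
    have hnd : ¬ C (p : ℤ) ∣ u' := by
      rintro ⟨q, hq⟩
      have : C (p : ℤ) ^ (vpx p u + 1) ∣ u := ⟨q, by rw [pow_succ, mul_assoc, ← hq]; exact hu'⟩
      rw [vpx_iff p hp u hu0] at this
      omega
    have hne : u'.map (Int.castRingHom (ZMod p)) ≠ 0 := fun h => hnd ((map_zero_iff p u').1 h)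
    have h1 := degree_le_of_dvd hd hne
    rw [hφ.degree_map] at h1
    have h2 : u'.degree = u.degree := by
      conv_rhs => rw [hu', ← C_pow]
      rw [degree_C_mul]
      exact pow_ne_zero _ (by exact_mod_cast hp.ne_zero)
    have h3 : (u'.map (Int.castRingHom (ZMod p))).degree ≤ u'.degree := degree_map_le
    rw [h2] at h3
    exact absurd (h1.trans h3) (not_le.2 hu)
  obtain ⟨u', hu', hud⟩ := small u hu0 hu
  obtain ⟨w', hw', hwd⟩ := small w hw0 hw
  intro hd
  have e : u * w = C ((p : ℤ) ^ (vpx p u + vpx p w)) * (u' * w') := by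
    conv_lhs => rw [hu', hw']
    rw [C_pow]; ring
  rw [e, phiC_C_mul φ hφ, C_pow, pow_succ] at hd
  have hd' := (mul_dvd_mul_iff_left (pow_ne_zero _ (primeC p hp).ne_zero)).1 hd
  rw [← map_zero_iff] at hd'
  simp only [phiC] at hd'
  rw [map_modByMonic _ hφ, modByMonic_eq_zero_iff_dvd (hφ.map _), Polynomial.map_mul] at hd'
  rcases hφirr.prime.dvd_or_dvd hd' with h | h
  · exact hud h
  · exact hwd h

lemma product_coeff (p : ℕ) (hp : p.Prime) (φ : ℤ[X]) (hφ : φ.Monic) (hd : 0 < φ.natDegree)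
    (hφirr : Irreducible (φ.map (Int.castRingHom (ZMod p)))) (k : ℕ) (g h : ℤ[X]) (I J : ℕ)
    (hgI : phiC φ I g ≠ 0) (hhJ : phiC φ J h ≠ 0)
    (hI : ∀ i, phiC φ i g ≠ 0 → k * vpx p (phiC φ I g) + I ≤ k * vpx p (phiC φ i g) + i ∧
      (I < i → k * vpx p (phiC φ I g) + I < k * vpx p (phiC φ i g) + i))
    (hJ : ∀ i, phiC φ i h ≠ 0 → k * vpx p (phiC φ J h) + J ≤ k * vpx p (phiC φ i h) + i ∧
      (J < i → k * vpx p (phiC φ J h) + J < k * vpx p (phiC φ i h) + i)) :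
    ¬ C (p : ℤ) ^ (vpx p (phiC φ I g) + vpx p (phiC φ J h) + 1) ∣ phiC φ (I + J) (g * h) := by
  set c := vpx p (phiC φ I g) + vpx p (phiC φ J h) with hc
  obtain ⟨N, hNg, hNh, hNI, hNJ⟩ : ∃ N, g.natDegree < (N + 1) * φ.natDegree ∧
      h.natDegree < (N + 1) * φ.natDegree ∧ I < N + 1 ∧ J < N + 1 := by
    refine ⟨g.natDegree + h.natDegree + I + J, ?_, ?_, by omega, by omega⟩ <;> nlinarith
  have eg := phiC_reconstruct φ hφ hd N g hNg
  have eh := phiC_reconstruct φ hφ hd N h hNh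
  have e : phiC φ (I + J) (g * h) = ∑ x ∈ Finset.range (N + 1) ×ˢ Finset.range (N + 1),
      phiC φ (I + J) (phiC φ x.1 g * phiC φ x.2 h * φ ^ (x.1 + x.2)) := by
    conv_lhs => rw [eg, eh]
    rw [Finset.sum_mul_sum, ← Finset.sum_product', phiC_sum φ hφ]
    refine Finset.sum_congr rfl fun x _ => ?_
    congr 1; ring
  have hmem : (I, J) ∈ Finset.range (N + 1) ×ˢ Finset.range (N + 1) := by
    simp; omega
  rw [e, ← Finset.add_sum_erase _ _ hmem, dvd_add_left]
  · have := phiC_mul_pow_add φ hφ (I + J) 0 (phiC φ I g * phiC φ J h)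
    rw [zero_add] at this
    simp only [this]
    exact rem_not_dvd p hp φ hφ hφirr _ _ hgI hhJ (phiC_degree φ hφ _ _) (phiC_degree φ hφ _ _)
  · refine Finset.dvd_sum fun x hx => ?_
    obtain ⟨i, j⟩ := x
    have hne : ¬ (i = I ∧ j = J) := by
      have := (Finset.mem_erase.1 hx).1
      simpa using this
    simp only
    by_cases hg0 : phiC φ i g = 0
    · simp [hg0, phiC_zero]
    by_cases hh0 : phiC φ j h = 0
    · simp [hh0, phiC_zero]
    by_cases hlt : I + J < i + j
    · rw [phiC_mul_pow_lt φ hφ _ _ _ hlt]; exact dvd_zero _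
    apply phiC_dvd φ hφ
    apply Dvd.dvd.mul_right
    have hv : c + 1 ≤ vpx p (phiC φ i g) + vpx p (phiC φ j h) := by
      have h1 := hI i hg0
      have h2 := hJ j hh0
      by_contra hcon
      push Not at hcon
      have h3 : k * (vpx p (phiC φ i g) + vpx p (phiC φ j h)) ≤ k * c :=
        Nat.mul_le_mul_left _ (by omega)
      rw [hc, mul_add, mul_add] at h3
      omega
    refine (pow_dvd_pow _ hv).trans ?_
    rw [pow_add]
    exact mul_dvd_mul ((vpx_iff p hp _ hg0 _).2 le_rfl) ((vpx_iff p hp _ hh0 _).2 le_rfl)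

lemma phiC_large (φ : ℤ[X]) (hφ : φ.Monic) (hd : 0 < φ.natDegree) (N : ℕ) (g : ℤ[X])
    (hg : g.natDegree < (N + 1) * φ.natDegree) (i : ℕ) (hi : phiC φ i g ≠ 0) : i ≤ N := by
  by_contra hc
  apply hi
  rw [phiC_reconstruct φ hφ hd N g hg,
    phiC_expansion φ hφ (N + 1) (fun i => phiC φ i g) (fun i _ => phiC_degree φ hφ _ _),
    if_neg (by omega)]

lemma core (n k ℓ p : ℕ) (hp : p.Prime) (hℓk : ℓ < k) (hk : 2 * k ≤ n)
    (φ : ℤ[X]) (hφ : φ.Monic)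
    (hφirr : Irreducible (φ.map (Int.castRingHom (ZMod p))))
    (b : ℕ → ℤ[X]) (hb : ∀ i < n + 1, (b i).degree < φ.degree)
    (hbn : ¬ C (p : ℤ) ∣ b n) (h1 : ∀ i < n - ℓ, C (p : ℤ) ∣ b i)
    (hb0 : b 0 ≠ 0)
    (h2 : ∀ j, 1 ≤ j → j ≤ n → b j ≠ 0 → k * vpx p (b 0) < k * vpx p (b j) + j)
    (g h : ℤ[X]) (hF : ∑ i ∈ Finset.range (n + 1), b i * φ ^ i = g * h)
    (hg1 : (ℓ + 1) * φ.natDegree ≤ g.natDegree)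
    (hg2 : g.natDegree < (k + 1) * φ.natDegree) : False := by
  haveI : Fact p.Prime := ⟨hp⟩
  have hd : 0 < φ.natDegree := by
    have := hφirr.natDegree_pos
    rwa [hφ.natDegree_map] at this
  have hE : ∀ m, phiC φ m (g * h) = if m < n + 1 then b m else 0 := by
    intro m; rw [← hF]; exact phiC_expansion φ hφ _ b hb m
  have hpF : ¬ C (p : ℤ) ∣ g * h := by
    intro hc
    have := phiC_dvd φ hφ (p : ℤ) n 1 (g * h) (by simpa using hc)
    rw [hE, if_pos (by omega), pow_one] at this
    exact hbn this
  have hpg : ¬ C (p : ℤ) ∣ g := fun hc => hpF (hc.mul_right _)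
  have hph : ¬ C (p : ℤ) ∣ h := fun hc => hpF (hc.mul_left _)
  have hg0 : g ≠ 0 := by rintro rfl; exact hpg (dvd_zero _)
  have hh0 : h ≠ 0 := by rintro rfl; exact hph (dvd_zero _)
  have hdegF : (g * h).natDegree < (n + 1) * φ.natDegree := by
    rw [← hF]
    refine lt_of_le_of_lt (natDegree_sum_le_of_forall_le (n := (n + 1) * φ.natDegree - 1) _ _ ?_) ?_
    · intro i hi
      have hi' := Finset.mem_range.1 hi
      have h3 : (b i).natDegree < φ.natDegree := by
        by_cases hz : b i = 0
        · simpa [hz] using hd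
        · exact natDegree_lt_natDegree hz (hb i hi')
      have h4 : (b i * φ ^ i).natDegree ≤ (b i).natDegree + i * φ.natDegree :=
        natDegree_mul_le.trans (Nat.add_le_add_left natDegree_pow_le _)
      have h5 : (i + 1) * φ.natDegree ≤ (n + 1) * φ.natDegree := Nat.mul_le_mul_right _ hi'
      rw [add_mul, one_mul] at h5
      omega
    · have : 0 < (n + 1) * φ.natDegree := by positivity
      omega
  rw [natDegree_mul hg0 hh0] at hdegF
  -- φ divides g mod p
  have hφg : C (p : ℤ) ∣ phiC φ 0 g := by
    rw [← map_zero_iff]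
    simp only [phiC]
    rw [map_modByMonic _ hφ, modByMonic_eq_zero_iff_dvd (hφ.map _)]
    by_contra hnd
    have h3 : (φ.map (Int.castRingHom (ZMod p))) ^ (n - ℓ) ∣
        g.map (Int.castRingHom (ZMod p)) * h.map (Int.castRingHom (ZMod p)) := by
      rw [← Polynomial.map_mul, ← hF, Polynomial.map_sum]
      refine Finset.dvd_sum fun i _ => ?_
      rw [Polynomial.map_mul, Polynomial.map_pow]
      by_cases hi : i < n - ℓ
      · rw [(map_zero_iff p _).2 (h1 i hi), zero_mul]; exact dvd_zero _
      · exact (pow_dvd_pow _ (by omega)).mul_left _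
    have h4 := hφirr.prime.pow_dvd_of_dvd_mul_left _ hnd h3
    have h5 := natDegree_le_of_dvd h4 (fun hz => hph ((map_zero_iff p h).1 hz))
    rw [natDegree_pow, hφ.natDegree_map] at h5
    have h6 : (h.map (Int.castRingHom (ZMod p))).natDegree ≤ h.natDegree := natDegree_map_le
    have h7 : (n + 1) * φ.natDegree = (n - ℓ) * φ.natDegree + (ℓ + 1) * φ.natDegree := by
      rw [← add_mul]; congr 1; omega
    omega
  obtain ⟨s, hsk, hs⟩ : ∃ s ≤ k, ¬ C (p : ℤ) ∣ phiC φ s g := by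
    by_contra hc
    push Not at hc
    apply hpg
    rw [phiC_reconstruct φ hφ hd k g hg2]
    exact Finset.dvd_sum fun i hi => (hc i (by have := Finset.mem_range.1 hi; omega)).mul_right _
  have hs0 : phiC φ s g ≠ 0 := by intro hz; exact hs (hz ▸ dvd_zero _)
  have hs1 : 1 ≤ s := by
    rcases Nat.eq_zero_or_pos s with h | h
    · subst h; exact absurd hφg hs
    · exact h
  have hvs : vpx p (phiC φ s g) = 0 := by
    by_contra hz
    apply hs
    rw [← pow_one (C (p : ℤ)), vpx_iff p hp _ hs0]; omega
  have hhN : h.natDegree < (h.natDegree + 1) * φ.natDegree := by nlinarith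
  have hhne : ∃ j, phiC φ j h ≠ 0 := by
    by_contra hc
    push Not at hc
    apply hh0
    rw [phiC_reconstruct φ hφ hd _ h hhN]
    exact Finset.sum_eq_zero fun i _ => by rw [hc i, zero_mul]
  obtain ⟨I, hI0, hI⟩ := exists_extremal k k (fun i => phiC φ i g ≠ 0)
    (fun i => vpx p (phiC φ i g)) (fun i => phiC_large φ hφ hd k g hg2 i) ⟨s, hs0⟩
  obtain ⟨J, hJ0, hJ⟩ := exists_extremal k h.natDegree (fun i => phiC φ i h ≠ 0)
    (fun i => vpx p (phiC φ i h)) (fun i => phiC_large φ hφ hd _ h hhN i) hhne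
  have hmain := product_coeff p hp φ hφ hd hφirr k g h I J hI0 hJ0 hI hJ
  have hI1 : 1 ≤ I := by
    rcases Nat.eq_zero_or_pos I with hz | hz
    · subst hz
      exfalso
      have h3 := (hI s hs0).2 (by omega)
      rw [hvs] at h3
      have h4 : 1 ≤ vpx p (phiC φ 0 g) := by
        rw [← vpx_iff p hp _ hI0, pow_one]; exact hφg
      have := Nat.mul_le_mul_left k h4
      omega
    · exact hz
  have hmn : I + J < n + 1 := by
    by_contra hc
    rw [hE, if_neg hc] at hmain
    exact hmain (dvd_zero _)
  rw [hE, if_pos hmn] at hmain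
  have hbm : b (I + J) ≠ 0 := fun hz => hmain (hz ▸ dvd_zero _)
  rw [vpx_iff p hp _ hbm] at hmain
  have h3 := h2 (I + J) (by omega) (by omega) hbm
  -- the zeroth coefficient
  have e0 : b 0 = (phiC φ 0 g * phiC φ 0 h) %ₘ φ := by
    have := hE 0
    rw [if_pos (by omega)] at this
    rw [← this]
    simp only [phiC]
    exact mul_modByMonic _ _ _
  have hg00 : phiC φ 0 g ≠ 0 := by
    intro hz; apply hb0; rw [e0, hz]; simp
  have hh00 : phiC φ 0 h ≠ 0 := by
    intro hz; apply hb0; rw [e0, hz]; simp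
  have hv0 : vpx p (phiC φ 0 g) + vpx p (phiC φ 0 h) ≤ vpx p (b 0) := by
    rw [← vpx_iff p hp _ hb0, e0]
    apply phiC_dvd φ hφ (p : ℤ) 0
    rw [pow_add]
    exact mul_dvd_mul ((vpx_iff p hp _ hg00 _).2 le_rfl) ((vpx_iff p hp _ hh00 _).2 le_rfl)
  have h4 := (hI 0 hg00).1
  have h5 := (hJ 0 hh00).1
  have h6 := Nat.mul_le_mul_left k hv0
  have h7 : vpx p (b (I + J)) ≤ vpx p (phiC φ I g) + vpx p (phiC φ J h) := by omega
  have h8 := Nat.mul_le_mul_left k h7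
  rw [mul_add] at h6 h8
  omega

lemma top_lc (n : ℕ) (φ : ℤ[X]) (hφ : φ.Monic) (fc : ℕ → ℤ[X])
    (hdeg : ∀ i, (fc i).degree < φ.degree) (hfn : fc n ≠ 0)
    (hm : (∑ i ∈ Finset.range (n + 1), fc i * φ ^ i).Monic) : (fc n).leadingCoeff = 1 := by
  have hlow : ∀ N : ℕ, (∑ i ∈ Finset.range N, fc i * φ ^ i).degree < (φ ^ N).degree := by
    intro N
    induction N with
    | zero => simp
    | succ N ih =>
      rw [Finset.sum_range_succ]
      have h0 : (fc N * φ ^ N).degree < (φ ^ (N + 1)).degree := by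
        rw [degree_mul, pow_succ', degree_mul]
        exact WithBot.add_lt_add_right (degree_ne_bot.2 (pow_ne_zero _ hφ.ne_zero)) (hdeg N)
      refine (degree_add_le _ _).trans_lt (max_lt (ih.trans_le ?_) h0)
      rw [pow_succ', degree_mul]
      have : (0 : WithBot ℕ) ≤ φ.degree := zero_le_degree_iff.2 hφ.ne_zero
      exact le_add_of_nonneg_left this
  have h := hm.leadingCoeff
  rw [Finset.sum_range_succ, leadingCoeff_add_of_degree_lt, leadingCoeff_mul,
    (hφ.pow n).leadingCoeff, mul_one] at h
  · exact h
  · refine (hlow n).trans_le ?_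
    rw [degree_mul]
    exact le_add_of_nonneg_left (zero_le_degree_iff.2 hfn)

/-- Extension of a lemma of Filaseta. Let `0 ≤ ℓ < k ≤ n/2`, `p` prime, `φ ∈ ℤ[x]` monic
and irreducible mod `p`, and `f ∈ ℤ[x]` monic, not divisible by `φ`, with `φ`-expansion
`f = ∑_{i≤n} (fc i)·φ^i`, `fc n ≠ 0`. Assume `p` divides every coefficient of `fc i` for
`i ≤ n-ℓ-1`, and the right-most edge of the `φ`-Newton polygon of `f` has slope `< 1/k`
(i.e. `k·(v_p^x(fc 0) - v_p^x(fc j)) < j` for all `1 ≤ j ≤ n` with `fc j ≠ 0`). If the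
`a i` satisfy `deg (a i) < deg φ - deg (fc i)`, `p` does not divide the content of `a 0`,
and `p` does not divide the leading coefficient of `a n`, then `∑_{i≤n} (a i)·(fc i)·φ^i`
has no factor in `ℤ[x]` of degree in `[(ℓ+1)·deg φ, (k+1)·deg φ)`. -/
theorem filaseta_extension (n k ℓ p : ℕ) (hp : p.Prime)
    (hℓk : ℓ < k) (hk : 2 * k ≤ n)
    (φ : ℤ[X]) (hφmonic : φ.Monic)
    (hφirr : Irreducible (φ.map (Int.castRingHom (ZMod p))))
    (f : ℤ[X]) (hfmonic : f.Monic) (hφf : ¬ φ ∣ f)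
    (fc : ℕ → ℤ[X])
    (hexp : f = ∑ i ∈ Finset.range (n + 1), fc i * φ ^ i)
    (hdegfc : ∀ i, (fc i).degree < φ.degree)
    (hfn : fc n ≠ 0)
    (h1 : ∀ i ≤ n - ℓ - 1, ∀ j, (p : ℤ) ∣ (fc i).coeff j)
    (hf0 : fc 0 ≠ 0)
    (h2 : ∀ j, 1 ≤ j → j ≤ n → fc j ≠ 0 → k * (vpx p (fc 0) - vpx p (fc j)) < j)
    (a : ℕ → ℤ[X])
    (hadeg : ∀ i ≤ n, (a i).degree + (fc i).degree < φ.degree)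
    (ha0 : ¬ (p : ℤ) ∣ (a 0).content)
    (han : ¬ (p : ℤ) ∣ (a n).leadingCoeff) :
    ∀ g : ℤ[X], g ∣ (∑ i ∈ Finset.range (n + 1), a i * fc i * φ ^ i) →
      ¬ ((ℓ + 1) * φ.natDegree ≤ g.natDegree ∧
         g.natDegree < (k + 1) * φ.natDegree) := by
  rintro g ⟨h, hF⟩ ⟨hg1, hg2⟩
  have hpr := primeC p hp
  have ha0' : ¬ C (p : ℤ) ∣ a 0 := fun hc => ha0 ((dvd_content_iff_C_dvd).2 hc)
  have ha00 : a 0 ≠ 0 := fun hz => ha0' (hz ▸ dvd_zero _)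
  have hb0 : a 0 * fc 0 ≠ 0 := mul_ne_zero ha00 hf0
  have hv0 : vpx p (a 0 * fc 0) ≤ vpx p (fc 0) := by
    rw [← vpx_iff p hp _ hf0]
    exact hpr.pow_dvd_of_dvd_mul_left _ ha0' ((vpx_iff p hp _ hb0 _).2 le_rfl)
  refine core n k ℓ p hp hℓk hk φ hφmonic hφirr (fun i => a i * fc i) ?_ ?_ ?_ hb0 ?_ g h hF
    hg1 hg2
  · intro i hi
    rw [degree_mul]; exact hadeg i (by omega)
  · intro hc
    have hl := top_lc n φ hφmonic fc hdegfc hfn (hexp ▸ hfmonic)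
    rw [C_dvd_iff_dvd_coeff] at hc
    have := hc (a n * fc n).natDegree
    rw [coeff_natDegree, leadingCoeff_mul, hl, mul_one] at this
    exact han this
  · intro i hi
    exact ((C_dvd_iff_dvd_coeff _ _).2 (h1 i (by omega))).mul_left _
  · intro j hj1 hjn hj
    have hfj : fc j ≠ 0 := right_ne_zero_of_mul hj
    have h3 := h2 j hj1 hjn hfj
    have h4 : vpx p (fc j) ≤ vpx p (a j * fc j) := by
      rw [← vpx_iff p hp _ hj]
      exact ((vpx_iff p hp _ hfj _).2 le_rfl).mul_left _
    have h5 : vpx p (a 0 * fc 0) ≤ vpx p (a j * fc j) + (vpx p (fc 0) - vpx p (fc j)) := by omega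
    have h6 := Nat.mul_le_mul_left k h5
    rw [mul_add] at h6
    omega
end
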